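/- arXiv:2004.13129 — 2 statements merged into one kernel-verified Lean document; each statement's English description precedes it below -/
import Mathlib

section
/- Let n ≥ 1 be an integer and let Ω ⊂ ℝ^{n+1} be a bounded open convex set. Then μH[n](∂Ω) ≤ |𝕊^n| · diam(Ω)^n / 2^n, where |𝕊^n| is the n-dimensional Hausdorff measure of the unit sphere {z ∈ ℝ^{n+1} : |z| = 1} and diam(Ω) is the Euclidean diameter of Ω. (Equality holds for balls, i.e., μH[n](∂B_1) / diam(B_1)^n = |𝕊^n| / 2^n.) -/
open MeasureTheory Set Filter Metric
open scoped ENNReal NNReal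

open scoped Pointwise in
/-- One-dimensional Brunn–Minkowski inequality for compact sets. -/
lemma Real.volume_add_volume_le_of_isCompact {A B : Set ℝ} (hA : IsCompact A) (hB : IsCompact B)
    (hA0 : A.Nonempty) (hB0 : B.Nonempty) :
    volume A + volume B ≤ volume (A + B) := by
  obtain ⟨a, haA, ha⟩ := hA.exists_isGreatest hA0
  obtain ⟨b, hbB, hb⟩ := hB.exists_isLeast hB0
  have h1 : (b +ᵥ A) ∪ (a +ᵥ B) ⊆ A + B := by
    rintro _ (⟨x, hx, rfl⟩ | ⟨x, hx, rfl⟩)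
    · exact ⟨x, hx, b, hbB, add_comm _ _⟩
    · exact ⟨a, haA, x, hx, rfl⟩
  have h2 : AEDisjoint volume (b +ᵥ A) (a +ᵥ B) := by
    refine measure_mono_null (t := {a + b}) ?_ (by simp)
    rintro _ ⟨⟨x, hx, rfl⟩, ⟨y, hy, hxy⟩⟩
    have := ha hx
    have := hb hy
    simp only [vadd_eq_add, mem_singleton_iff] at *
    linarith
  calc volume A + volume B = volume (b +ᵥ A) + volume (a +ᵥ B) := by
        rw [measure_vadd, measure_vadd]
    _ = volume ((b +ᵥ A) ∪ (a +ᵥ B)) :=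
        (measure_union₀ (hB.measurableSet.const_vadd a).nullMeasurableSet h2).symm
    _ ≤ _ := measure_mono h1

/-- Inner regularity of the Lebesgue measure by nonempty compact subsets. -/
lemma exists_isCompact_nonempty_le {A : Set ℝ} (hA : MeasurableSet A) (hA0 : A.Nonempty)
    {r : ℝ≥0∞} (hr : r < volume A ∨ r = 0) :
    ∃ K ⊆ A, IsCompact K ∧ K.Nonempty ∧ r ≤ volume K := by
  rcases hr with hr | rfl
  · obtain ⟨K, hKA, hK, hrK⟩ := hA.exists_lt_isCompact hr
    exact ⟨K, hKA, hK, nonempty_of_measure_ne_zero (μ := volume) (ne_bot_of_gt hrK), hrK.le⟩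
  · obtain ⟨a, ha⟩ := hA0
    exact ⟨{a}, by simpa using ha, isCompact_singleton, singleton_nonempty a, zero_le⟩

open scoped Pointwise in
/-- One-dimensional Brunn–Minkowski inequality. -/
lemma Real.volume_add_volume_le {A B : Set ℝ} (hA : MeasurableSet A) (hB : MeasurableSet B)
    (hA0 : A.Nonempty) (hB0 : B.Nonempty) :
    volume A + volume B ≤ volume (A + B) := by
  have key : ∀ r s : ℝ≥0∞, (r < volume A ∨ r = 0) → (s < volume B ∨ s = 0) →
      r + s ≤ volume (A + B) := by
    intro r s hr hs
    obtain ⟨K, hKA, hK, hK0, hrK⟩ := exists_isCompact_nonempty_le hA hA0 hr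
    obtain ⟨L, hLB, hL, hL0, hsL⟩ := exists_isCompact_nonempty_le hB hB0 hs
    calc r + s ≤ volume K + volume L := add_le_add hrK hsL
      _ ≤ volume (K + L) := Real.volume_add_volume_le_of_isCompact hK hL hK0 hL0
      _ ≤ _ := measure_mono (add_subset_add hKA hLB)
  rcases eq_or_ne (volume A) 0 with h0A | h0A <;> rcases eq_or_ne (volume B) 0 with h0B | h0B
  · simp [h0A, h0B]
  · rw [h0A, zero_add]
    exact le_of_forall_lt fun c hc ↦ by
      obtain ⟨d, hcd, hd⟩ := exists_between hc
      exact hcd.trans_le (by simpa using key 0 d (Or.inr rfl) (Or.inl hd))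
  · rw [h0B, add_zero]
    exact le_of_forall_lt fun c hc ↦ by
      obtain ⟨d, hcd, hd⟩ := exists_between hc
      exact hcd.trans_le (by simpa using key d 0 (Or.inl hd) (Or.inr rfl))
  · exact le_of_forall_lt fun c hc ↦ by
      obtain ⟨r, hr, s, hs, hrs⟩ := ENNReal.exists_lt_add_of_lt_add hc h0A h0B
      exact hrs.trans_le (key r s (Or.inl hr) (Or.inl hs))

lemma ENNReal.four_mul_mul_le_add_sq (x y : ℝ≥0∞) : 4 * (x * y) ≤ (x + y) ^ 2 := by
  induction x with
  | top => simp
  | coe x =>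
    induction y with
    | top => simp
    | coe y =>
      norm_cast
      rw [← NNReal.coe_le_coe]
      push_cast
      nlinarith [sq_nonneg ((x : ℝ) - y)]

open scoped Pointwise in
lemma lintegral_add_lintegral_le_of_normalized {f g h : ℝ → ℝ≥0∞}
    (hf : Measurable f) (hg : Measurable g) (hh : Measurable h)
    (hf1 : ⨆ x, f x = 1) (hg1 : ⨆ x, g x = 1)
    (H : ∀ x y, f x * g y ≤ h (x + y) ^ 2) :
    (∫⁻ x, f x) + ∫⁻ x, g x ≤ ∫⁻ x, h x := by
  have layer : ∀ F : ℝ → ℝ≥0∞, Measurable F → (∀ x, F x ≤ 1) →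
      ∫⁻ x, F x = ∫⁻ t in Ioi (0 : ℝ), volume {x | ENNReal.ofReal t < F x} := by
    intro F hF hF1
    have hft : ∀ x, F x ≠ ⊤ := fun x ↦ ne_top_of_le_ne_top ENNReal.one_ne_top (hF1 x)
    have e : ∀ x, F x = ENNReal.ofReal (F x).toReal := fun x ↦ (ENNReal.ofReal_toReal (hft x)).symm
    rw [lintegral_congr e, lintegral_eq_lintegral_meas_lt volume
      (Eventually.of_forall fun x ↦ ENNReal.toReal_nonneg) hF.ennreal_toReal.aemeasurable]
    refine setLIntegral_congr_fun measurableSet_Ioi fun t ht ↦ ?_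
    congr 1
    ext x
    exact (ENNReal.ofReal_lt_iff_lt_toReal (le_of_lt ht) (hft x)).symm
  have hfle : ∀ x, f x ≤ 1 := fun x ↦ hf1 ▸ le_iSup f x
  have hgle : ∀ x, g x ≤ 1 := fun x ↦ hg1 ▸ le_iSup g x
  have hm : ∀ F : ℝ → ℝ≥0∞, Measurable fun t : ℝ ↦ volume {x | ENNReal.ofReal t < F x} := by
    intro F
    refine Antitone.measurable fun s t hst ↦ measure_mono fun x hx ↦ ?_
    exact (ENNReal.ofReal_le_ofReal hst).trans_lt hx
  calc (∫⁻ x, f x) + ∫⁻ x, g x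
      = ∫⁻ t in Ioi (0 : ℝ), (volume {x | ENNReal.ofReal t < f x}
          + volume {x | ENNReal.ofReal t < g x}) := by
        rw [layer f hf hfle, layer g hg hgle, lintegral_add_left (hm f)]
    _ ≤ ∫⁻ t in Ioi (0 : ℝ), volume {x | ENNReal.ofReal t < min (h x) 1} := by
        refine setLIntegral_mono (hm _) fun t ht ↦ ?_
        rcases lt_or_ge (ENNReal.ofReal t) 1 with h1 | h1
        · refine (Real.volume_add_volume_le (measurableSet_lt measurable_const hf)
            (measurableSet_lt measurable_const hg) ?_ ?_).trans (measure_mono ?_)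
          · exact lt_iSup_iff.1 (hf1 ▸ h1)
          · exact lt_iSup_iff.1 (hg1 ▸ h1)
          · rintro _ ⟨x, hx, y, hy, rfl⟩
            refine lt_min ?_ h1
            by_contra! hlt
            have : ENNReal.ofReal t * ENNReal.ofReal t < f x * g y := ENNReal.mul_lt_mul hx hy
            refine absurd (this.trans_le (H x y)) (not_lt.2 ?_)
            rw [sq]
            gcongr
        · have e1 : {x | ENNReal.ofReal t < f x} = ∅ :=
            eq_empty_of_forall_notMem fun x hx ↦ absurd (hx.trans_le (hfle x)) (not_lt.2 h1)
          have e2 : {x | ENNReal.ofReal t < g x} = ∅ :=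
            eq_empty_of_forall_notMem fun x hx ↦ absurd (hx.trans_le (hgle x)) (not_lt.2 h1)
          simp [e1, e2]
    _ = ∫⁻ x, min (h x) 1 := (layer _ (hh.min measurable_const) fun x ↦ min_le_right _ _).symm
    _ ≤ _ := lintegral_mono fun x ↦ min_le_left _ _

lemma prekopa_leindler_one_of_bounded {f g h : ℝ → ℝ≥0∞}
    (hf : Measurable f) (hg : Measurable g) (hh : Measurable h)
    (hfb : ⨆ x, f x ≠ ⊤) (hgb : ⨆ x, g x ≠ ⊤)
    (H : ∀ x y, f x * g y ≤ h (x + y) ^ 2) :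
    4 * ((∫⁻ x, f x) * ∫⁻ x, g x) ≤ (∫⁻ x, h x) ^ 2 := by
  set a := ⨆ x, f x with ha
  set b := ⨆ x, g x with hb
  rcases eq_or_ne a 0 with h0 | ha0
  · have : ∀ x, f x = 0 := fun x ↦ le_zero_iff.1 ((le_iSup f x).trans (ha ▸ h0).le)
    simp [this]
  rcases eq_or_ne b 0 with h0 | hb0
  · have : ∀ x, g x = 0 := fun x ↦ le_zero_iff.1 ((le_iSup g x).trans (hb ▸ h0).le)
    simp [this]
  set c := (a * b) ^ (1 / 2 : ℝ) with hc
  have hc2 : c ^ 2 = a * b := by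
    rw [hc, ← ENNReal.rpow_natCast, ← ENNReal.rpow_mul]
    norm_num
  have hc0 : c ≠ 0 := by
    intro h
    rw [h] at hc2
    simp [ha0, hb0] at hc2
  have hct : c ≠ ⊤ := by
    intro h
    rw [h] at hc2
    exact ENNReal.mul_ne_top hfb hgb (by simpa using hc2.symm)
  have key := lintegral_add_lintegral_le_of_normalized (f := fun x ↦ a⁻¹ * f x)
    (g := fun x ↦ b⁻¹ * g x) (h := fun x ↦ c⁻¹ * h x) (hf.const_mul _) (hg.const_mul _)
    (hh.const_mul _) (by rw [← ENNReal.mul_iSup, ← ha, ENNReal.inv_mul_cancel ha0 hfb])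
    (by rw [← ENNReal.mul_iSup, ← hb, ENNReal.inv_mul_cancel hb0 hgb])
    (fun x y ↦ by
      rw [mul_pow, ← ENNReal.inv_pow, hc2, ENNReal.mul_inv (Or.inl ha0) (Or.inl hfb),
        mul_mul_mul_comm]
      gcongr
      exact H x y)
  rw [lintegral_const_mul _ hf, lintegral_const_mul _ hg, lintegral_const_mul _ hh] at key
  have := (ENNReal.four_mul_mul_le_add_sq _ _).trans (pow_le_pow_left' key 2)
  rw [mul_pow, ← ENNReal.inv_pow, hc2, mul_mul_mul_comm,
    ← ENNReal.mul_inv (Or.inl ha0) (Or.inl hfb), mul_left_comm] at this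
  exact (ENNReal.mul_le_mul_iff_right (ENNReal.inv_ne_zero.2 (ENNReal.mul_ne_top hfb hgb))
    (ENNReal.inv_ne_top.2 (mul_ne_zero ha0 hb0))).1 this

lemma lintegral_eq_iSup_lintegral_min_natCast {α : Type*} [MeasurableSpace α] {μ : Measure α}
    {f : α → ℝ≥0∞} (hf : Measurable f) :
    ∫⁻ x, f x ∂μ = ⨆ N : ℕ, ∫⁻ x, min (f x) N ∂μ := by
  rw [← lintegral_iSup (fun N ↦ hf.min measurable_const)
    fun M N hMN x ↦ min_le_min_left _ (by exact_mod_cast hMN)]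
  refine lintegral_congr fun x ↦ ?_
  rw [← inf_iSup_eq, ENNReal.iSup_natCast, inf_top_eq]

/-- The one-dimensional Prékopa–Leindler inequality (with equal weights). -/
lemma prekopa_leindler_one {f g h : ℝ → ℝ≥0∞}
    (hf : Measurable f) (hg : Measurable g) (hh : Measurable h)
    (H : ∀ x y, f x * g y ≤ h (x + y) ^ 2) :
    4 * ((∫⁻ x, f x) * ∫⁻ x, g x) ≤ (∫⁻ x, h x) ^ 2 := by
  rw [lintegral_eq_iSup_lintegral_min_natCast hf, lintegral_eq_iSup_lintegral_min_natCast hg]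
  simp_rw [ENNReal.iSup_mul, ENNReal.mul_iSup]
  refine iSup_le fun N ↦ iSup_le fun M ↦ ?_
  refine prekopa_leindler_one_of_bounded (hf.min measurable_const) (hg.min measurable_const) hh
    ?_ ?_ fun x y ↦ le_trans ?_ (H x y)
  · exact ne_top_of_le_ne_top (ENNReal.natCast_ne_top N) (iSup_le fun x ↦ min_le_right _ _)
  · exact ne_top_of_le_ne_top (ENNReal.natCast_ne_top M) (iSup_le fun x ↦ min_le_right _ _)
  · gcongr <;> exact min_le_left _ _

/-- The Prékopa–Leindler inequality (with equal weights) on `ℝⁿ`. -/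
lemma prekopa_leindler (n : ℕ) {f g h : (Fin n → ℝ) → ℝ≥0∞}
    (hf : Measurable f) (hg : Measurable g) (hh : Measurable h)
    (H : ∀ x y, f x * g y ≤ h (x + y) ^ 2) :
    4 ^ n * ((∫⁻ x, f x) * ∫⁻ x, g x) ≤ (∫⁻ x, h x) ^ 2 := by
  induction n with
  | zero =>
    have e : ∀ F : (Fin 0 → ℝ) → ℝ≥0∞, ∫⁻ x, F x = F 0 := fun F ↦ by
      rw [volume_pi, Measure.pi_of_empty _ 0]
      exact lintegral_dirac _ _
    simpa [e] using H 0 0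
  | succ n ih =>
    let e := MeasurableEquiv.piFinSuccAbove (fun _ : Fin (n + 1) ↦ ℝ) 0
    have he : MeasurePreserving e.symm :=
      (volume_preserving_piFinSuccAbove (fun _ : Fin (n + 1) ↦ ℝ) 0).symm
    have hadd : ∀ s t x y, e.symm (s, x) + e.symm (t, y) = e.symm (s + t, x + y) := by
      intro s t x y
      ext i
      refine Fin.cases ?_ (fun i ↦ ?_) i <;>
        simp [e, MeasurableEquiv.piFinSuccAbove, Fin.insertNthEquiv]
    have fub : ∀ F : (Fin (n + 1) → ℝ) → ℝ≥0∞, Measurable F →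
        ∫⁻ x, F x = ∫⁻ y : Fin n → ℝ, ∫⁻ s : ℝ, F (e.symm (s, y)) := by
      intro F hF
      rw [← he.lintegral_comp hF, Measure.volume_eq_prod, lintegral_prod_symm']
      exact hF.comp e.symm.measurable
    have hmeas : ∀ F : (Fin (n + 1) → ℝ) → ℝ≥0∞, Measurable F →
        Measurable fun y : Fin n → ℝ ↦ ∫⁻ s : ℝ, F (e.symm (s, y)) := fun F hF ↦
      (hF.comp e.symm.measurable).lintegral_prod_left'
    have hsec : ∀ (F : (Fin (n + 1) → ℝ) → ℝ≥0∞) (y), Measurable F →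
        Measurable fun s : ℝ ↦ F (e.symm (s, y)) := fun F y hF ↦
      hF.comp (e.symm.measurable.comp (measurable_id.prodMk measurable_const))
    rw [fub f hf, fub g hg, fub h hh, pow_succ, mul_assoc, ← mul_assoc 4,
      ← lintegral_const_mul _ (hmeas f hf)]
    refine ih ((hmeas f hf).const_mul 4) (hmeas g hg) (hmeas h hh) fun x y ↦ ?_
    rw [mul_assoc]
    refine prekopa_leindler_one (hsec f x hf) (hsec g y hg) (hsec h (x + y) hh) fun s t ↦ ?_
    rw [← hadd]
    exact H _ _

open scoped Pointwise in
/-- Multiplicative Brunn–Minkowski inequality for compact sets. -/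
lemma four_pow_mul_volume_mul_volume_le {n : ℕ} {A B : Set (Fin n → ℝ)}
    (hA : IsCompact A) (hB : IsCompact B) :
    4 ^ n * (volume A * volume B) ≤ volume (A + B) ^ 2 := by
  have hm := (hA.add hB).measurableSet
  have := prekopa_leindler n (f := A.indicator 1) (g := B.indicator 1) (h := (A + B).indicator 1)
    (measurable_one.indicator hA.measurableSet) (measurable_one.indicator hB.measurableSet)
    (measurable_one.indicator hm) fun x y ↦ by
      by_cases hx : x ∈ A <;> by_cases hy : y ∈ B <;> simp [hx, hy]
      simp [Set.add_mem_add hx hy]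
  simpa [lintegral_indicator_one, hA.measurableSet, hB.measurableSet, hm] using this

open scoped Pointwise in
/-- The isodiametric inequality for compact subsets of Euclidean space. -/
lemma EuclideanSpace.volume_le_volume_closedBall_diam {n : ℕ} {A : Set (EuclideanSpace ℝ (Fin n))}
    (hA : IsCompact A) : volume A ≤ volume (closedBall (0 : EuclideanSpace ℝ (Fin n)) (diam A / 2)) := by
  let e := (EuclideanSpace.equiv (Fin n) ℝ)
  have hv : ∀ S : Set (EuclideanSpace ℝ (Fin n)), volume (e '' S) = volume S := fun S ↦ by
    have := (EuclideanSpace.volume_preserving_symm_measurableEquiv_toLp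
      (Fin n)).measure_preimage_equiv (e '' S)
    rw [← this]
    congr 1
    exact e.injective.preimage_image S
  have h1 := four_pow_mul_volume_mul_volume_le (hA.image e.continuous) (hA.neg.image e.continuous)
  rw [← image_add, hv, hv, hv, Measure.measure_neg] at h1
  have h2 : A + -A ⊆ closedBall 0 (diam A) := by
    rintro _ ⟨x, hx, y, hy, rfl⟩
    rw [mem_closedBall_zero_iff]
    simpa [dist_eq_norm] using dist_le_diam_of_mem hA.isBounded hx hy
  have h3 : (closedBall (0 : EuclideanSpace ℝ (Fin n)) (diam A)) =
      (2 : ℝ) • closedBall (0 : EuclideanSpace ℝ (Fin n)) (diam A / 2) := by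
    rw [_root_.smul_closedBall _ _ (by positivity)]
    simp [mul_div_cancel₀]
  have h4 := h1.trans (pow_le_pow_left' (measure_mono h2) 2)
  rw [h3, Measure.addHaar_smul] at h4
  have h5 : ENNReal.ofReal |(2 : ℝ) ^ Module.finrank ℝ (EuclideanSpace ℝ (Fin n))| = 2 ^ n := by
    simp [ENNReal.ofReal_pow]
  rw [h5, mul_pow, ← pow_mul, mul_comm n 2, pow_mul, ← sq] at h4
  norm_num at h4
  rw [ENNReal.mul_le_mul_iff_right (by positivity) (by finiteness)] at h4
  exact (ENNReal.pow_le_pow_left_iff two_ne_zero).1 h4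

section Cylinder

variable {E : Type*} [NormedAddCommGroup E] [InnerProductSpace ℝ E]

/-- The cylinder with axis `u` over the set `F`, cut to unit height. -/
def unitCylinder (u : E) (F : Set E) : Set E :=
  {x | inner ℝ u x ∈ Ico (0 : ℝ) 1 ∧ ∃ t : ℝ, x + t • u ∈ F}

lemma exists_linearIsometryEquiv_apply_eq {v w : E} (h : ‖v‖ = ‖w‖) :
    ∃ R : E ≃ₗᵢ[ℝ] E, R v = w :=
  ⟨(ℝ ∙ (v - w))ᗮ.reflection, Submodule.reflection_sub h⟩

lemma unitCylinder_mono (u : E) {F G : Set E} (h : F ⊆ G) :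
    unitCylinder u F ⊆ unitCylinder u G :=
  fun _ ⟨hx, t, ht⟩ ↦ ⟨hx, t, h ht⟩

lemma mem_unitCylinder_iff_of_subset_hyperplane {u x : E} {F : Set E} {b : ℝ} {ν : E} (hνu : inner ℝ ν u ≠ 0)
    (hF : ∀ x ∈ F, inner ℝ ν x = b) :
    x ∈ unitCylinder u F ↔
      inner ℝ u x ∈ Ico (0 : ℝ) 1 ∧ x + ((b - inner ℝ ν x) / inner ℝ ν u) • u ∈ F := by
  refine ⟨fun ⟨hx, t, ht⟩ ↦ ⟨hx, ?_⟩, fun ⟨hx, h⟩ ↦ ⟨hx, _, h⟩⟩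
  have := hF _ ht
  rw [inner_add_right, inner_smul_right] at this
  have ht' : (b - inner ℝ ν x) / inner ℝ ν u = t := by
    rw [div_eq_iff hνu]
    linarith
  rwa [ht']

variable [MeasurableSpace E] [BorelSpace E]

lemma measurableSet_unitCylinder {u : E} {F : Set E} {b : ℝ} {ν : E} (hνu : inner ℝ ν u ≠ 0)
    (hF : ∀ x ∈ F, inner ℝ ν x = b) (hFm : MeasurableSet F) :
    MeasurableSet (unitCylinder u F) := by
  have : unitCylinder u F = {x | inner ℝ u x ∈ Ico (0 : ℝ) 1} ∩
      {x | x + ((b - inner ℝ ν x) / inner ℝ ν u) • u ∈ F} := by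
    ext x
    exact mem_unitCylinder_iff_of_subset_hyperplane hνu hF
  rw [this]
  refine MeasurableSet.inter ?_ ?_
  · exact (Continuous.measurable (by fun_prop)) measurableSet_Ico
  · exact (Continuous.measurable (f := fun x ↦ x + ((b - inner ℝ ν x) / inner ℝ ν u) • u)
      (by fun_prop)) hFm

variable [FiniteDimensional ℝ E]

/-- Tilting the axis of a cylinder over a subset of a hyperplane. -/
lemma volume_unitCylinder_eq {u ν : E} (hu : ‖u‖ = 1) (hν : ‖ν‖ = 1) {F : Set E} {b : ℝ}
    (hF : ∀ x ∈ F, inner ℝ ν x = b) :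
    volume (unitCylinder u F) =
      ENNReal.ofReal |inner ℝ ν u| * volume (unitCylinder ν F) := by
  have huu : inner ℝ u u = (1 : ℝ) := by simp [hu]
  have hνν : inner ℝ ν ν = (1 : ℝ) := by simp [hν]
  let f : Module.Dual ℝ E := innerₛₗ ℝ u - (inner ℝ u ν : ℝ) • innerₛₗ ℝ ν
  let M : E →ₗ[ℝ] E := LinearMap.transvection (innerₛₗ ℝ ν) (u - ν) ∘ₗ
    LinearMap.transvection f (-ν)
  have hM : ∀ x, M x = (x - (inner ℝ ν x : ℝ) • ν)
      + ((inner ℝ ν x : ℝ) - inner ℝ u (x - (inner ℝ ν x : ℝ) • ν)) • u := by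
    intro x
    simp only [M, f, LinearMap.comp_apply, LinearMap.transvection.apply, innerₛₗ_apply_apply,
      LinearMap.sub_apply, LinearMap.smul_apply, inner_add_right, inner_sub_right,
      inner_smul_right, inner_neg_right, hνν, smul_eq_mul]
    module
  have hdet : LinearMap.det M = inner ℝ ν u := by
    simp [M, f, LinearMap.det_comp, inner_sub_right, hν]
  have himage : unitCylinder u F = (fun x ↦ b • (ν - (inner ℝ u ν : ℝ) • u) + x) ''
      (M '' unitCylinder ν F) := by
    rw [image_image]
    ext z
    constructor
    · rintro ⟨hz, t, ht⟩
      have hb := hF _ ht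
      have hνb : inner ℝ ν (z + t • u + ((inner ℝ u z : ℝ) - b) • ν) = inner ℝ u z := by
        rw [inner_add_right, hb, inner_smul_right, hνν]
        ring
      refine ⟨z + t • u + ((inner ℝ u z : ℝ) - b) • ν, ⟨by rwa [hνb], b - inner ℝ u z, ?_⟩, ?_⟩
      · convert ht using 1
        module
      · simp only [hM, hνb]
        simp only [inner_add_right, inner_sub_right, inner_smul_right, huu]
        module
    · rintro ⟨x, ⟨hx, t, ht⟩, rfl⟩
      have hb := hF _ ht
      rw [inner_add_right, inner_smul_right, hνν, mul_one] at hb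
      refine ⟨?_, ?_⟩
      · simpa only [hM, inner_add_right, inner_sub_right, inner_smul_right, huu, mul_one,
          sub_self, mul_zero, zero_add, add_sub_cancel] using hx
      · refine ⟨inner ℝ u x - inner ℝ ν x + t * inner ℝ u ν, ?_⟩
        convert ht using 1
        simp only [hM, ← hb, inner_sub_right, inner_smul_right]
        module
  rw [himage]
  rw [show (fun x ↦ b • (ν - (inner ℝ u ν : ℝ) • u) + x) = 
    (Homeomorph.addLeft (b • (ν - (inner ℝ u ν : ℝ) • u)) : E → E) from rfl]
  rw [Homeomorph.image_eq_preimage_symm, Homeomorph.addLeft_symm, Homeomorph.coe_addLeft,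
    measure_preimage_add, Measure.addHaar_image_linearMap, hdet]

end Cylinder

/-- Projection along a unit vector, in coordinates. -/
lemma exists_projection_volume_unitCylinder {n : ℕ} {u : EuclideanSpace ℝ (Fin (n + 1))}
    (hu : ‖u‖ = 1) :
    ∃ g : EuclideanSpace ℝ (Fin (n + 1)) →ₗ[ℝ] EuclideanSpace ℝ (Fin n),
      (∀ x, ‖x‖ ^ 2 = (inner ℝ u x : ℝ) ^ 2 + ‖g x‖ ^ 2) ∧
      (∀ y, ∃ x, g x = y ∧ inner ℝ u x = (0 : ℝ)) ∧
      ∀ F, volume (unitCylinder u F) = volume (g '' F) := by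
  obtain ⟨R, hR⟩ := exists_linearIsometryEquiv_apply_eq (v := u)
    (w := EuclideanSpace.single (0 : Fin (n + 1)) (1 : ℝ)) (by simp [hu])
  have hin : ∀ x, inner ℝ u x = R x 0 := fun x ↦ by
    rw [← R.inner_map_map, hR]
    simp [EuclideanSpace.inner_single_left]
  let g : EuclideanSpace ℝ (Fin (n + 1)) →ₗ[ℝ] EuclideanSpace ℝ (Fin n) :=
    { toFun := fun x ↦ WithLp.toLp 2 fun i ↦ R x i.succ
      map_add' := fun x y ↦ by ext; simp
      map_smul' := fun c x ↦ by ext; simp }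
  have hnorm : ∀ x, ‖x‖ ^ 2 = (inner ℝ u x : ℝ) ^ 2 + ‖g x‖ ^ 2 := fun x ↦ by
    rw [← R.norm_map, EuclideanSpace.norm_sq_eq, EuclideanSpace.norm_sq_eq, Fin.sum_univ_succ, hin]
    simp [g]
  have hsurj : ∀ y, ∃ x, g x = y ∧ inner ℝ u x = (0 : ℝ) := fun y ↦ by
    refine ⟨R.symm (WithLp.toLp 2 (Fin.cons 0 fun i ↦ y i)), ?_, ?_⟩
    · ext i
      simp [g]
    · simp [hin]
  refine ⟨g, hnorm, hsurj, fun F ↦ ?_⟩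
  let φ := (R.toMeasurableEquiv.trans (MeasurableEquiv.toLp 2 (Fin (n + 1) → ℝ)).symm).trans
    (MeasurableEquiv.piFinSuccAbove (fun _ : Fin (n + 1) ↦ ℝ) 0)
  have hφ : MeasurePreserving φ := (volume_preserving_piFinSuccAbove (fun _ : Fin (n + 1) ↦ ℝ) 0).comp
    ((EuclideanSpace.volume_preserving_symm_measurableEquiv_toLp (Fin (n + 1))).comp
      R.measurePreserving)
  have hφx : ∀ x, φ x = (inner ℝ u x, (MeasurableEquiv.toLp 2 (Fin n → ℝ)).symm (g x)) := fun x ↦ by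
    rw [hin]
    rfl
  have hgu : g u = 0 := by
    have := hnorm u
    simpa [hu] using this
  have hker : ∀ x y, g x = g y → ∃ t : ℝ, x + t • u = y := by
    intro x y hxy
    refine ⟨inner ℝ u (y - x), ?_⟩
    have := hnorm (x + (inner ℝ u (y - x) : ℝ) • u - y)
    rw [map_sub, map_add, map_smul, hgu, hxy] at this
    simp only [inner_sub_right, inner_add_right, inner_smul_right, real_inner_self_eq_norm_sq,
      hu] at this
    rw [← sub_eq_zero, ← norm_eq_zero, ← sq_eq_zero_iff, inner_sub_right, this]
    simp
  have hcyl : unitCylinder u F =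
      φ ⁻¹' (Ico 0 1 ×ˢ ((MeasurableEquiv.toLp 2 (Fin n → ℝ)) ⁻¹' (g '' F))) := by
    ext x
    simp only [unitCylinder, mem_ofPred_eq, mem_preimage, hφx, mem_prod,
      MeasurableEquiv.apply_symm_apply]
    refine and_congr_right fun _ ↦ ⟨fun ⟨t, ht⟩ ↦ ⟨_, ht, by simp [hgu]⟩, ?_⟩
    rintro ⟨y, hy, hyx⟩
    obtain ⟨t, ht⟩ := hker x y hyx.symm
    exact ⟨t, ht ▸ hy⟩
  have hpre : volume (MeasurableEquiv.toLp 2 (Fin n → ℝ) ⁻¹' (g '' F)) = volume (g '' F) :=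
    (EuclideanSpace.volume_preserving_symm_measurableEquiv_toLp
      (Fin n)).symm.measure_preimage_equiv (g '' F)
  rw [hcyl, hφ.measure_preimage_equiv, Measure.volume_eq_prod, Measure.prod_prod, hpre]
  simp

/-- On hyperplanes, the volume of the cylinder is a fixed multiple of the Hausdorff measure. -/
lemma exists_volume_unitCylinder_eq_mul_hausdorffMeasure (n : ℕ) :
    ∃ c : ℝ≥0∞, c ≠ 0 ∧ c ≠ ⊤ ∧ ∀ (u : EuclideanSpace ℝ (Fin (n + 1))) (b : ℝ)
      (F : Set (EuclideanSpace ℝ (Fin (n + 1)))), ‖u‖ = 1 → (∀ x ∈ F, inner ℝ u x = b) →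
      volume (unitCylinder u F) = c * μH[(n : ℝ)] F := by
  have : (μH[(n : ℝ)] : Measure (EuclideanSpace ℝ (Fin n))).IsAddHaarMeasure := by
    simpa using isAddHaarMeasure_hausdorffMeasure (E := EuclideanSpace ℝ (Fin n))
  have hv := Measure.isAddLeftInvariant_eq_smul (volume : Measure (EuclideanSpace ℝ (Fin n)))
    μH[(n : ℝ)]
  set c := Measure.addHaarScalarFactor (volume : Measure (EuclideanSpace ℝ (Fin n))) μH[(n : ℝ)]
  refine ⟨c, ?_, ENNReal.coe_ne_top, fun u b F hu hF ↦ ?_⟩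
  · exact_mod_cast (Measure.addHaarScalarFactor_pos_of_isAddHaarMeasure _ _).ne'
  · obtain ⟨g, hnorm, -, hg⟩ := exists_projection_volume_unitCylinder hu
    rw [hg, hv, Measure.smul_apply]
    have hiso : Isometry (fun x : F ↦ g x) := by
      refine Isometry.of_dist_eq fun x y ↦ ?_
      rw [Subtype.dist_eq, dist_eq_norm, dist_eq_norm, ← map_sub]
      have := hnorm (x - y)
      rw [inner_sub_right, hF _ x.2, hF _ y.2, sub_self] at this
      rw [← sq_eq_sq₀ (norm_nonneg _) (norm_nonneg _), this]
      ring
    have h1 := hiso.hausdorffMeasure_image (d := n) (Or.inl (by positivity)) univ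
    have h2 := isometry_subtype_coe (s := F).hausdorffMeasure_image (d := n)
      (Or.inl (by positivity)) univ
    rw [image_univ, Subtype.range_coe] at h2
    rw [image_univ, ← h2] at h1
    have h3 : g '' F = range fun x : F ↦ g x := by
      rw [image_eq_range]
    rw [h3, h1]
    rfl

section Polytope

variable {E : Type*} [NormedAddCommGroup E] [InnerProductSpace ℝ E]

/-- The intersection of the half-spaces `⟪ν i, x⟫ ≤ b i`. -/
def polyhedron {N : ℕ} (ν : Fin N → E) (b : Fin N → ℝ) : Set E :=
  {x | ∀ i, inner ℝ (ν i) x ≤ b i}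

/-- The facets of a polyhedron, made pairwise disjoint by giving common points to the facet of
smallest index. -/
def disjointFacet {N : ℕ} (ν : Fin N → E) (b : Fin N → ℝ) (i : Fin N) : Set E :=
  {x | x ∈ polyhedron ν b ∧ inner ℝ (ν i) x = b i ∧ ∀ j < i, inner ℝ (ν j) x < b j}

variable {N : ℕ} {ν : Fin N → E} {b : Fin N → ℝ}

lemma isClosed_polyhedron : IsClosed (polyhedron ν b) := by
  simp only [polyhedron, ofPred_forall]
  exact isClosed_iInter fun i ↦ isClosed_le (by fun_prop) continuous_const

lemma pairwise_disjoint_disjointFacet : Pairwise (Function.onFun Disjoint (disjointFacet ν b)) := by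
  have key : ∀ i j, i < j → Disjoint (disjointFacet ν b i) (disjointFacet ν b j) := by
    intro i j hij
    refine Set.disjoint_left.2 fun x hi hj ↦ ?_
    exact (hj.2.2 i hij).ne hi.2.1
  intro i j hij
  rcases lt_or_gt_of_ne hij with h | h
  · exact key i j h
  · exact (key j i h).symm

lemma measurableSet_disjointFacet [MeasurableSpace E] [BorelSpace E] (i : Fin N) :
    MeasurableSet (disjointFacet ν b i) := by
  have : disjointFacet ν b i = polyhedron ν b ∩ ({x | inner ℝ (ν i) x = b i} ∩
      ⋂ j : {j // j < i}, {x | inner ℝ (ν j) x < b j}) := by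
    ext x
    simp only [disjointFacet, mem_ofPred_eq, mem_inter_iff, mem_iInter, Subtype.forall]
  rw [this]
  refine isClosed_polyhedron.measurableSet.inter (MeasurableSet.inter ?_ (MeasurableSet.iInter ?_))
  · exact (isClosed_eq (by fun_prop) continuous_const).measurableSet
  · exact fun j ↦ (isOpen_lt (by fun_prop) continuous_const).measurableSet

lemma mem_iUnion_disjointFacet_of_eq {x : E} (hx : x ∈ polyhedron ν b) {i : Fin N}
    (hi : inner ℝ (ν i) x = b i) : ∃ i, x ∈ disjointFacet ν b i := by
  classical
  have hne : (Finset.univ.filter fun i ↦ inner ℝ (ν i) x = b i).Nonempty := ⟨i, by simpa using hi⟩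
  refine ⟨_, hx, (Finset.mem_filter.1 (Finset.min'_mem _ hne)).2, fun j hj ↦ ?_⟩
  refine lt_of_le_of_ne (hx j) fun h ↦ ?_
  exact absurd (Finset.min'_le _ j (by simpa using h)) (not_le.2 hj)

/-- Every ray from a point of a bounded polyhedron meets a facet. -/
lemma exists_add_smul_mem_disjointFacet (hP : Bornology.IsBounded (polyhedron ν b)) {x v : E}
    (hx : x ∈ polyhedron ν b) (hv : v ≠ 0) :
    ∃ t : ℝ, 0 ≤ t ∧ ∃ i, x + t • v ∈ disjointFacet ν b i := by
  set T : Set ℝ := {t | 0 ≤ t ∧ x + t • v ∈ polyhedron ν b} with hT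
  have hTc : IsClosed T := isClosed_Ici.inter
    (isClosed_polyhedron.preimage (f := fun t : ℝ ↦ x + t • v) (by fun_prop))
  obtain ⟨C, hC⟩ := hP.exists_norm_le
  have hTb : BddAbove T := by
    refine ⟨(C + ‖x‖) / ‖v‖, fun t ⟨ht0, ht⟩ ↦ ?_⟩
    rw [le_div_iff₀ (norm_pos_iff.2 hv)]
    have h1 := hC _ ht
    have h2 : ‖t • v‖ ≤ ‖x + t • v‖ + ‖x‖ := by
      simpa using norm_sub_le (x + t • v) x
    rw [norm_smul, Real.norm_of_nonneg ht0] at h2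
    linarith
  have hT0 : T.Nonempty := ⟨0, le_rfl, by simpa using hx⟩
  have ht := hTc.csSup_mem hT0 hTb
  refine ⟨sSup T, ht.1, ?_⟩
  by_contra hcon
  have hlt : ∀ i, inner ℝ (ν i) (x + sSup T • v) < b i := fun i ↦
    lt_of_le_of_ne (ht.2 i) fun h ↦ hcon (mem_iUnion_disjointFacet_of_eq ht.2 h)
  have hev : ∀ᶠ t in nhds (sSup T), ∀ i, inner ℝ (ν i) (x + t • v) < b i := by
    refine eventually_all.2 fun i ↦ ?_
    have hcont : Continuous fun t : ℝ ↦ (inner ℝ (ν i) (x + t • v) : ℝ) := by fun_prop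
    exact hcont.continuousAt.eventually_lt_const (hlt i)
  obtain ⟨t, htT, ht'⟩ := ((hev.filter_mono nhdsWithin_le_nhds).and
    (self_mem_nhdsWithin (s := Ioi (sSup T)))).exists
  exact absurd (le_csSup hTb ⟨ht.1.trans (le_of_lt ht'), fun i ↦ (htT i).le⟩) (not_le.2 ht')

/-- A line transversal to all facets cannot meet three of them in three distinct points. -/
lemma not_three_mem_disjointFacet {u x : E} (hu : ∀ i, inner ℝ (ν i) u ≠ 0) {i j k : Fin N}
    {r s t : ℝ} (hr : x + r • u ∈ disjointFacet ν b i) (hs : x + s • u ∈ disjointFacet ν b j)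
    (ht : x + t • u ∈ disjointFacet ν b k) (hrs : r < s) (hst : s < t) : False := by
  have h1 := hr.1 j
  have h2 := hs.2.1
  have h3 := ht.1 j
  simp only [inner_add_right, inner_smul_right] at h1 h2 h3
  rcases lt_or_gt_of_ne (hu j) with h | h <;> nlinarith

lemma convex_polyhedron : Convex ℝ (polyhedron ν b) := by
  intro x hx y hy s t hs ht hst i
  rw [inner_add_right, inner_smul_right, inner_smul_right]
  calc s * inner ℝ (ν i) x + t * inner ℝ (ν i) y ≤ s * b i + t * b i := by
        gcongr
        · exact hx i
        · exact hy i
    _ = b i := by rw [← add_mul, hst, one_mul]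

/-- A compact convex set is separated from a point outside it by a unit vector. -/
lemma exists_unit_separation [CompleteSpace E] {K : Set E} (hK : IsCompact K) (hKc : Convex ℝ K)
    (hK0 : K.Nonempty) {y : E} (hy : y ∉ K) :
    ∃ ν : E, ∃ b : ℝ, ‖ν‖ = 1 ∧ (∀ k ∈ K, inner ℝ ν k < b) ∧ b < inner ℝ ν y := by
  obtain ⟨f, c, hf, hc⟩ := geometric_hahn_banach_closed_point hKc hK.isClosed hy
  set w := (InnerProductSpace.toDual ℝ E).symm f
  have hw : ∀ z, f z = inner ℝ w z := fun z ↦ by simp [w]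
  have hw0 : w ≠ 0 := by
    rintro h
    obtain ⟨k, hk⟩ := hK0
    have := hf k hk
    rw [hw, h, inner_zero_left] at this
    rw [hw, h, inner_zero_left] at hc
    linarith
  have hpos : 0 < ‖w‖⁻¹ := by positivity
  refine ⟨‖w‖⁻¹ • w, ‖w‖⁻¹ * c, ?_, fun k hk ↦ ?_, ?_⟩
  · rw [norm_smul, norm_inv, norm_norm, inv_mul_cancel₀ (norm_ne_zero_iff.2 hw0)]
  · rw [real_inner_smul_left, ← hw]
    exact mul_lt_mul_of_pos_left (hf k hk) hpos
  · rw [real_inner_smul_left, ← hw]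
    exact mul_lt_mul_of_pos_left hc hpos

/-- Compact convex sets can be approximated from outside by polyhedra. -/
lemma exists_polyhedron_between [FiniteDimensional ℝ E] {K U : Set E} (hK : IsCompact K)
    (hKc : Convex ℝ K) (hK0 : K.Nonempty) (hU : IsOpen U) (hUb : Bornology.IsBounded U)
    (hKU : K ⊆ U) :
    ∃ (N : ℕ) (ν : Fin N → E) (b : Fin N → ℝ), (∀ i, ‖ν i‖ = 1) ∧
      (∀ k ∈ K, ∀ i, inner ℝ (ν i) k < b i) ∧ polyhedron ν b ⊆ U := by
  have := FiniteDimensional.proper_real E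
  have := FiniteDimensional.complete ℝ E
  have hfc : IsCompact (frontier U) :=
    isCompact_of_isClosed_isBounded isClosed_frontier (hUb.closure.subset frontier_subset_closure)
  have hsep : ∀ y : frontier U, ∃ p : E × ℝ, ‖p.1‖ = 1 ∧ (∀ k ∈ K, inner ℝ p.1 k < p.2) ∧
      p.2 < inner ℝ p.1 (y : E) := fun y ↦ by
    obtain ⟨ν, b, h⟩ := exists_unit_separation hK hKc hK0 (y := y) fun hy ↦
      (disjoint_left.1 (disjoint_frontier_iff_isOpen.2 hU) y.2) (hKU hy)
    exact ⟨(ν, b), h⟩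
  choose p hp1 hp2 hp3 using hsep
  obtain ⟨s, hs⟩ := hfc.elim_finite_subcover (fun y : frontier U ↦ {z | (p y).2 < inner ℝ (p y).1 z})
    (fun y ↦ isOpen_lt continuous_const (by fun_prop)) fun y hy ↦ mem_iUnion.2 ⟨⟨y, hy⟩, hp3 _⟩
  let e := s.equivFin.symm
  refine ⟨s.card, fun i ↦ (p (e i)).1, fun i ↦ (p (e i)).2, fun i ↦ hp1 _,
    fun k hk i ↦ hp2 _ k hk, fun z hz ↦ ?_⟩
  by_contra hzU
  obtain ⟨k, hk⟩ := hK0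
  have hkP : k ∈ polyhedron (fun i ↦ (p (e i)).1) (fun i ↦ (p (e i)).2) :=
    fun i ↦ (hp2 _ k hk).le
  obtain ⟨y, hyseg, hyU⟩ : (segment ℝ k z ∩ frontier U).Nonempty := by
    by_contra hcon
    have hdis : Disjoint (segment ℝ k z) (frontier U) :=
      disjoint_iff_inter_eq_empty.2 (not_nonempty_iff_eq_empty.1 hcon)
    have hsub : segment ℝ k z ⊆ U :=
      (convex_segment k z).isPreconnected.subset_left_of_subset_union hU
        isClosed_closure.isOpen_compl
        (disjoint_compl_right_iff_subset.2 subset_closure)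
        (fun x hx ↦ by
          by_cases hxU : x ∈ U
          · exact Or.inl hxU
          · refine Or.inr fun hxc ↦ disjoint_left.1 hdis hx ?_
            rw [hU.frontier_eq]
            exact ⟨hxc, hxU⟩)
        ⟨k, left_mem_segment ℝ k z, hKU hk⟩
    exact hzU (hsub (right_mem_segment ℝ k z))
  have hyP := convex_polyhedron.segment_subset hkP hz hyseg
  obtain ⟨i, hi, hyi⟩ := mem_iUnion₂.1 (hs hyU)
  have := hyP (e.symm ⟨i, hi⟩)
  simp only [Equiv.apply_symm_apply] at this
  exact absurd this (not_le.2 hyi)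

end Polytope

/-- If the points of `X` are translated along outer normals into `Y`, the Hausdorff measure does
not decrease. -/
lemma hausdorffMeasure_le_of_normal_translate {E : Type*} [NormedAddCommGroup E]
    [InnerProductSpace ℝ E] [MeasurableSpace E] [BorelSpace E] {X Y : Set E} {d : ℝ} (hd : 0 ≤ d)
    (h : ∀ x ∈ X, ∃ y ∈ Y, ∀ z ∈ X, inner ℝ (y - x) (z - x) ≤ (0 : ℝ)) :
    μH[d] X ≤ μH[d] Y := by
  choose! f hfY hf using h
  have hanti : AntilipschitzWith 1 fun x : X ↦ f x := by
    refine AntilipschitzWith.of_le_mul_dist fun x y ↦ ?_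
    rw [NNReal.coe_one, one_mul, Subtype.dist_eq, dist_eq_norm, dist_eq_norm]
    have h1 := hf x x.2 y y.2
    have h2 := hf y y.2 x x.2
    have h3 : ‖(x : E) - y‖ ^ 2 ≤ inner ℝ (f x - f y) ((x : E) - y) := by
      have e : (inner ℝ (f x - f y) ((x : E) - y) : ℝ) = ‖(x : E) - y‖ ^ 2
          - inner ℝ (f x - x) ((y : E) - x) - inner ℝ (f y - y) ((x : E) - y) := by
        rw [← real_inner_self_eq_norm_sq, ← neg_sub (x : E) y, inner_neg_right, sub_neg_eq_add,
          ← inner_add_left, ← inner_sub_left]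
        congr 1
        abel
      linarith
    have h4 := h3.trans (real_inner_le_norm _ _)
    rcases (norm_nonneg ((x : E) - y)).eq_or_lt with h0 | h0
    · rw [← h0]
      positivity
    · nlinarith
  have h1 := hanti.le_hausdorffMeasure_image hd univ
  have h2 := isometry_subtype_coe (s := X).hausdorffMeasure_image (d := d) (Or.inl hd) univ
  rw [image_univ, Subtype.range_coe] at h2
  rw [h2]
  refine h1.trans ?_
  simp only [ENNReal.coe_one, ENNReal.one_rpow, one_mul, image_univ]
  exact measure_mono (range_subset_iff.2 fun x ↦ hfY x x.2)

section Counting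

open Classical in
lemma sum_indicator_one_eq_card {α : Type*} {N : ℕ} (S : Fin N → Set α) (x : α) :
    ∑ i, (S i).indicator (1 : α → ℝ≥0∞) x = (Finset.univ.filter fun i ↦ x ∈ S i).card := by
  simp [indicator_apply, Finset.sum_boole]

variable {E : Type*} [NormedAddCommGroup E] [InnerProductSpace ℝ E] [MeasurableSpace E]
  [BorelSpace E] {N : ℕ} {ν : Fin N → E} {b : Fin N → ℝ} {u : E}

lemma measurable_indicator_unitCylinder_disjointFacet (hu : ∀ i, inner ℝ (ν i) u ≠ 0)
    (i : Fin N) :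
    Measurable ((unitCylinder u (disjointFacet ν b i)).indicator (1 : E → ℝ≥0∞)) :=
  measurable_one.indicator (measurableSet_unitCylinder (hu i) (fun _ hx ↦ hx.2.1)
    (measurableSet_disjointFacet i))

variable [FiniteDimensional ℝ E]

lemma sum_volume_unitCylinder_disjointFacet (hu : ∀ i, inner ℝ (ν i) u ≠ 0) :
    ∑ i, volume (unitCylinder u (disjointFacet ν b i)) =
      ∫⁻ x, ∑ i, (unitCylinder u (disjointFacet ν b i)).indicator (1 : E → ℝ≥0∞) x := by
  rw [lintegral_finsetSum _ fun i _ ↦ measurable_indicator_unitCylinder_disjointFacet hu i]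
  refine Finset.sum_congr rfl fun i _ ↦ ?_
  rw [lintegral_indicator_one (measurableSet_unitCylinder (hu i) (fun _ hx ↦ hx.2.1)
    (measurableSet_disjointFacet i))]

/-- The cylinders over the facets of a polyhedron cover every point at most twice. -/
lemma sum_volume_unitCylinder_disjointFacet_le (hu : ∀ i, inner ℝ (ν i) u ≠ 0) :
    ∑ i, volume (unitCylinder u (disjointFacet ν b i)) ≤
      2 * volume (unitCylinder u (polyhedron ν b)) := by
  classical
  rw [sum_volume_unitCylinder_disjointFacet hu]
  calc ∫⁻ x, ∑ i, (unitCylinder u (disjointFacet ν b i)).indicator (1 : E → ℝ≥0∞) x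
      ≤ ∫⁻ x, (unitCylinder u (polyhedron ν b)).indicator (fun _ ↦ 2) x := by
        refine lintegral_mono fun x ↦ ?_
        rw [sum_indicator_one_eq_card]
        by_cases hx : x ∈ unitCylinder u (polyhedron ν b)
        · rw [indicator_of_mem hx]
          suffices h : (Finset.univ.filter fun i ↦
              x ∈ unitCylinder u (disjointFacet ν b i)).card ≤ 2 from
              (Nat.cast_le (α := ℝ≥0∞).2 h).trans_eq Nat.cast_ofNat
          by_contra! hcard
          obtain ⟨i, j, k, hi, hj, hk, hij, hik, hjk⟩ := Finset.two_lt_card_iff.1 hcard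
          obtain ⟨-, r, hr⟩ := (Finset.mem_filter.1 hi).2
          obtain ⟨-, s, hs⟩ := (Finset.mem_filter.1 hj).2
          obtain ⟨-, t, ht⟩ := (Finset.mem_filter.1 hk).2
          have hne : ∀ {i j : Fin N} {r s : ℝ}, i ≠ j → x + r • u ∈ disjointFacet ν b i →
              x + s • u ∈ disjointFacet ν b j → r ≠ s := by
            rintro i j r s hij hr hs rfl
            exact disjoint_left.1 (pairwise_disjoint_disjointFacet hij) hr hs
          have three := @not_three_mem_disjointFacet E _ _ N ν b u x hu
          rcases lt_or_gt_of_ne (hne hij hr hs) with h1 | h1 <;>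
          rcases lt_or_gt_of_ne (hne hik hr ht) with h2 | h2 <;>
          rcases lt_or_gt_of_ne (hne hjk hs ht) with h3 | h3
          · exact three hr hs ht h1 h3
          · exact three hr ht hs h2 h3
          · linarith
          · exact three ht hr hs h2 h1
          · exact three hs hr ht h1 h2
          · linarith
          · exact three hs ht hr h3 h2
          · exact three ht hs hr h3 h1
        · rw [indicator_of_notMem hx]
          rw [Finset.filter_eq_empty_iff.2 fun i _ hi ↦ hx (unitCylinder_mono u (fun _ h ↦ h.1) hi)]
          simp
    _ ≤ _ := lintegral_indicator_const_le _ _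

/-- The cylinders over the facets of a bounded polyhedron cover the cylinder over its interior at
least twice. -/
lemma le_sum_volume_unitCylinder_disjointFacet (hu : ∀ i, inner ℝ (ν i) u ≠ 0) (hu0 : u ≠ 0)
    (hP : Bornology.IsBounded (polyhedron ν b)) {K : Set E}
    (hK : ∀ k ∈ K, ∀ i, inner ℝ (ν i) k < b i) :
    2 * volume (unitCylinder u K) ≤ ∑ i, volume (unitCylinder u (disjointFacet ν b i)) := by
  classical
  rw [sum_volume_unitCylinder_disjointFacet hu]
  calc 2 * volume (unitCylinder u K) = ∫⁻ _ in unitCylinder u K, 2 := by rw [setLIntegral_const]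
    _ ≤ ∫⁻ x in unitCylinder u K,
        ∑ i, (unitCylinder u (disjointFacet ν b i)).indicator (1 : E → ℝ≥0∞) x := by
      refine setLIntegral_mono (Finset.measurable_fun_sum _ fun i _ ↦
        measurable_indicator_unitCylinder_disjointFacet hu i) ?_
      rintro x ⟨hx, s, hs⟩
      have hsP : x + s • u ∈ polyhedron ν b := fun i ↦ (hK _ hs i).le
      obtain ⟨t, ht, i, hi⟩ := exists_add_smul_mem_disjointFacet hP hsP hu0
      obtain ⟨r, hr, j, hj⟩ := exists_add_smul_mem_disjointFacet hP hsP (neg_ne_zero.2 hu0)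
      rw [sum_indicator_one_eq_card]
      have hi' : x + (s + t) • u ∈ disjointFacet ν b i := by
        rwa [add_smul, ← add_assoc]
      have hj' : x + (s - r) • u ∈ disjointFacet ν b j := by
        rwa [sub_smul, ← add_sub_assoc, sub_eq_add_neg, ← smul_neg]
      have hij : i ≠ j := by
        rintro rfl
        have h1 := hi'.2.1
        have h2 := hj'.2.1
        rw [inner_add_right, inner_smul_right] at h1 h2
        have h3 : (t + r) * inner ℝ (ν i) u = 0 := by linear_combination h1 - h2
        have h4 : t + r = 0 := by simpa [hu i] using h3
        have h5 : t = 0 := by linarith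
        rw [h5, zero_smul, add_zero] at hi
        exact (hK _ hs i).ne hi.2.1
      have : 2 ≤ (Finset.univ.filter fun i ↦ x ∈ unitCylinder u (disjointFacet ν b i)).card :=
        Finset.one_lt_card_iff.2 ⟨i, j, Finset.mem_filter.2 ⟨Finset.mem_univ _, hx, _, hi'⟩,
          Finset.mem_filter.2 ⟨Finset.mem_univ _, hx, _, hj'⟩, hij⟩
      exact_mod_cast this
    _ ≤ _ := setLIntegral_le_lintegral _ _

lemma volume_setOf_inner_eq_zero {ν : E} (hν : ν ≠ 0) :
    volume {u : E | inner ℝ ν u = (0 : ℝ)} = 0 := by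
  have h := Measure.addHaar_submodule (volume : Measure E) (innerₛₗ ℝ ν).ker (by
    intro h
    have : ν ∈ (innerₛₗ ℝ ν).ker := h ▸ Submodule.mem_top
    exact hν (by simpa using this))
  convert h using 2
  ext
  simp

/-- The mean of `|⟪ν, u⟫|` over the unit ball does not depend on the unit vector `ν`. -/
lemma exists_lintegral_abs_inner_eq [Nontrivial E] :
    ∃ κ : ℝ≥0∞, κ ≠ 0 ∧ κ ≠ ⊤ ∧ ∀ ν : E, ‖ν‖ = 1 →
      ∫⁻ u in ball (0 : E) 1, ENNReal.ofReal |inner ℝ ν u| = κ := by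
  obtain ⟨e, he⟩ := exists_norm_eq E (zero_le_one' ℝ)
  refine ⟨∫⁻ u in ball (0 : E) 1, ENNReal.ofReal |inner ℝ e u|, ?_, ?_, fun ν hν ↦ ?_⟩
  · intro h
    rw [lintegral_eq_zero_iff (by fun_prop), EventuallyEq, ae_restrict_iff' measurableSet_ball] at h
    have h0 : ∀ᵐ u : E, inner ℝ e u ≠ (0 : ℝ) := by
      rw [ae_iff]
      simpa using volume_setOf_inner_eq_zero (ν := e) (by rintro rfl; simp at he)
    have hb : volume (ball (0 : E) 1) = 0 := by
      refine measure_eq_zero_iff_ae_notMem.2 ?_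
      filter_upwards [h, h0] with u hu hu0 hub
      have := hu hub
      simp only [Pi.zero_apply, ENNReal.ofReal_eq_zero] at this
      exact hu0 (abs_nonpos_iff.1 this)
    exact (measure_ball_pos volume (0 : E) one_pos).ne' hb
  · refine ne_top_of_le_ne_top (b := ∫⁻ u in ball (0 : E) 1, 1) ?_ ?_
    · simpa using measure_ball_lt_top.ne
    · refine setLIntegral_mono measurable_one fun u hu ↦ ?_
      rw [ENNReal.ofReal_le_one]
      refine (abs_real_inner_le_norm _ _).trans ?_
      rw [he, one_mul]
      exact (mem_ball_zero_iff.1 hu).le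
  · obtain ⟨R, hR⟩ := exists_linearIsometryEquiv_apply_eq (hν.trans he.symm)
    have hp : R ⁻¹' ball (0 : E) 1 = ball 0 1 := by
      ext
      simp
    rw [← R.measurePreserving.setLIntegral_comp_preimage_emb
      R.toMeasurableEquiv.measurableEmbedding (fun u ↦ ENNReal.ofReal |inner ℝ e u|), hp]
    simp_rw [← hR, R.inner_map_map]

end Counting

/-- Cauchy's surface area formula for polyhedra, combined with bounds for the projections. -/
lemma exists_cauchy_constants (n : ℕ) :
    ∃ C L : ℝ≥0∞, C ≠ 0 ∧ C ≠ ⊤ ∧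
      ∀ (N : ℕ) (ν : Fin N → EuclideanSpace ℝ (Fin (n + 1))) (b : Fin N → ℝ),
        (∀ i, ‖ν i‖ = 1) → Bornology.IsBounded (polyhedron ν b) →
        C * μH[(n : ℝ)] (⋃ i, disjointFacet ν b i) ≤
          L * ENNReal.ofReal ((diam (polyhedron ν b) / 2) ^ n) ∧
        ((∀ k ∈ closedBall (0 : EuclideanSpace ℝ (Fin (n + 1))) 1, ∀ i, inner ℝ (ν i) k < b i) →
          L ≤ C * μH[(n : ℝ)] (⋃ i, disjointFacet ν b i)) := by
  obtain ⟨c, hc0, hct, hc⟩ := exists_volume_unitCylinder_eq_mul_hausdorffMeasure n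
  obtain ⟨κ, hκ0, hκt, hκ⟩ := exists_lintegral_abs_inner_eq (E := EuclideanSpace ℝ (Fin (n + 1)))
  set B := volume (closedBall (0 : EuclideanSpace ℝ (Fin n)) 1) with hB
  set J := ∫⁻ u in ball (0 : EuclideanSpace ℝ (Fin (n + 1))) 1, ENNReal.ofReal ‖u‖ with hJ
  have hJt : J ≠ ⊤ := by
    refine ne_top_of_le_ne_top
      (b := ∫⁻ u in ball (0 : EuclideanSpace ℝ (Fin (n + 1))) 1, 1) ?_ ?_
    · simpa using measure_ball_lt_top.ne
    · refine setLIntegral_mono measurable_one fun u hu ↦ ?_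
      rw [ENNReal.ofReal_le_one]
      exact (mem_ball_zero_iff.1 hu).le
  refine ⟨κ * c, J * (2 * B), mul_ne_zero hκ0 hc0, ENNReal.mul_ne_top hκt hct,
    fun N ν b hν hP ↦ ?_⟩
  have hpc : IsCompact (polyhedron ν b) :=
    isCompact_of_isClosed_isBounded isClosed_polyhedron hP
  have hsum : κ * c * μH[(n : ℝ)] (⋃ i, disjointFacet ν b i) =
      ∫⁻ u in ball (0 : EuclideanSpace ℝ (Fin (n + 1))) 1,
        ∑ i, ENNReal.ofReal |inner ℝ (ν i) u| * (c * μH[(n : ℝ)] (disjointFacet ν b i)) := by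
    rw [measure_iUnion pairwise_disjoint_disjointFacet fun i ↦ measurableSet_disjointFacet i,
      tsum_fintype, Finset.mul_sum, lintegral_finsetSum _ fun i _ ↦ by fun_prop]
    refine Finset.sum_congr rfl fun i _ ↦ ?_
    rw [lintegral_mul_const _ (by fun_prop), hκ _ (hν i), mul_assoc]
  have hae : ∀ᵐ u ∂volume.restrict (ball (0 : EuclideanSpace ℝ (Fin (n + 1))) 1),
      u ≠ 0 ∧ ∀ i, inner ℝ (ν i) u ≠ (0 : ℝ) := by
    refine ae_restrict_of_ae ((Measure.ae_ne volume 0).and (ae_all_iff.2 fun i ↦ ?_))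
    rw [ae_iff]
    simpa using volume_setOf_inner_eq_zero (ν := ν i) (by rw [← norm_ne_zero_iff, hν i]; simp)
  have hscale : ∀ u : EuclideanSpace ℝ (Fin (n + 1)), u ≠ 0 →
      ∑ i, ENNReal.ofReal |inner ℝ (ν i) u| * (c * μH[(n : ℝ)] (disjointFacet ν b i)) =
      ENNReal.ofReal ‖u‖ * ∑ i, volume (unitCylinder (‖u‖⁻¹ • u) (disjointFacet ν b i)) := by
    intro u hu
    have hu1 : ‖‖u‖⁻¹ • u‖ = 1 := by
      rw [norm_smul, norm_inv, norm_norm, inv_mul_cancel₀ (norm_ne_zero_iff.2 hu)]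
    rw [Finset.mul_sum]
    refine Finset.sum_congr rfl fun i _ ↦ ?_
    rw [volume_unitCylinder_eq hu1 (hν i) (fun _ hx ↦ hx.2.1),
      hc _ _ _ (hν i) (fun _ hx ↦ hx.2.1), ← mul_assoc (ENNReal.ofReal ‖u‖),
      ← ENNReal.ofReal_mul (norm_nonneg u)]
    congr 2
    rw [inner_smul_right, abs_mul, abs_inv, abs_norm, mul_inv_cancel_left₀ (norm_ne_zero_iff.2 hu)]
  have hunit : ∀ u : EuclideanSpace ℝ (Fin (n + 1)), u ≠ 0 → (∀ i, inner ℝ (ν i) u ≠ (0 : ℝ)) →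
      ‖‖u‖⁻¹ • u‖ = 1 ∧ ∀ i, inner ℝ (ν i) (‖u‖⁻¹ • u) ≠ (0 : ℝ) := by
    intro u hu0 hu
    refine ⟨?_, fun i ↦ ?_⟩
    · rw [norm_smul, norm_inv, norm_norm, inv_mul_cancel₀ (norm_ne_zero_iff.2 hu0)]
    · rw [inner_smul_right]
      exact mul_ne_zero (inv_ne_zero (norm_ne_zero_iff.2 hu0)) (hu i)
  have hproj : ∀ {u : EuclideanSpace ℝ (Fin (n + 1))} {g : EuclideanSpace ℝ (Fin (n + 1)) →ₗ[ℝ]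
      EuclideanSpace ℝ (Fin n)}, (∀ x, ‖x‖ ^ 2 = (inner ℝ u x : ℝ) ^ 2 + ‖g x‖ ^ 2) →
      ∀ x, ‖g x‖ ≤ ‖x‖ := fun {u g} hg x ↦
    (sq_le_sq₀ (norm_nonneg _) (norm_nonneg x)).1 (by
      rw [hg x]; exact le_add_of_nonneg_left (sq_nonneg _))
  rw [hsum]
  constructor
  · calc _ ≤ ∫⁻ u in ball (0 : EuclideanSpace ℝ (Fin (n + 1))) 1, ENNReal.ofReal ‖u‖ *
          (2 * B * ENNReal.ofReal ((diam (polyhedron ν b) / 2) ^ n)) := by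
          refine lintegral_mono_ae ?_
          filter_upwards [hae] with u ⟨hu0, hu⟩
          obtain ⟨hu1, hui⟩ := hunit u hu0 hu
          rw [hscale u hu0]
          gcongr
          refine (sum_volume_unitCylinder_disjointFacet_le hui).trans ?_
          rw [mul_assoc]
          gcongr
          obtain ⟨g, hg, -, hgF⟩ := exists_projection_volume_unitCylinder hu1
          rw [hgF]
          have hgl : LipschitzWith 1 g := LipschitzWith.of_dist_le_mul fun x y ↦ by
            simpa [dist_eq_norm] using hproj hg (x - y)
          have hgd : diam (g '' polyhedron ν b) ≤ diam (polyhedron ν b) := by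
            simpa using hgl.diam_image_le _ hP
          refine (EuclideanSpace.volume_le_volume_closedBall_diam
            (hpc.image hgl.continuous)).trans ?_
          refine (measure_mono (closedBall_subset_closedBall
            (div_le_div_of_nonneg_right hgd zero_le_two))).trans ?_
          rw [Measure.addHaar_closedBall' _ _ (by positivity), mul_comm]
          simp [hB]
    _ = _ := by
          rw [lintegral_mul_const _ (by fun_prop), ← hJ]
          ring
  · intro hK
    calc J * (2 * B) = ∫⁻ u in ball (0 : EuclideanSpace ℝ (Fin (n + 1))) 1, ENNReal.ofReal ‖u‖ *
          (2 * B) := by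
          rw [lintegral_mul_const _ (by fun_prop)]
      _ ≤ _ := by
          refine lintegral_mono_ae ?_
          filter_upwards [hae] with u ⟨hu0, hu⟩
          obtain ⟨hu1, hui⟩ := hunit u hu0 hu
          rw [hscale u hu0]
          gcongr
          refine le_trans ?_ (le_sum_volume_unitCylinder_disjointFacet hui
            (by rw [← norm_ne_zero_iff, hu1]; exact one_ne_zero) hP hK)
          gcongr
          obtain ⟨g, hg, hgs, hgF⟩ := exists_projection_volume_unitCylinder hu1
          rw [hgF]
          refine measure_mono fun y hy ↦ ?_
          obtain ⟨x, rfl, hx⟩ := hgs y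
          refine ⟨x, ?_, rfl⟩
          have := hg x
          rw [hx, zero_pow two_ne_zero, zero_add,
            sq_eq_sq₀ (norm_nonneg _) (norm_nonneg _)] at this
          rwa [mem_closedBall_zero_iff, this, ← mem_closedBall_zero_iff]

/-- The boundary of a convex open set is not larger than that of a polyhedron containing it. -/
lemma hausdorffMeasure_frontier_le {E : Type*} [NormedAddCommGroup E]
    [InnerProductSpace ℝ E] [MeasurableSpace E] [BorelSpace E] [CompleteSpace E] {Ω : Set E}
    (hΩo : IsOpen Ω) (hΩc : Convex ℝ Ω) (hΩ0 : Ω.Nonempty) {N : ℕ} {ν : Fin N → E}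
    {b : Fin N → ℝ} (hP : Bornology.IsBounded (polyhedron ν b)) (hΩP : closure Ω ⊆ polyhedron ν b)
    {d : ℝ} (hd : 0 ≤ d) :
    μH[d] (frontier Ω) ≤ μH[d] (⋃ i, disjointFacet ν b i) := by
  refine hausdorffMeasure_le_of_normal_translate hd fun x hx ↦ ?_
  obtain ⟨f, hf⟩ := geometric_hahn_banach_open_point hΩc hΩo
    (disjoint_left.1 (disjoint_frontier_iff_isOpen.2 hΩo) hx)
  set w := (InnerProductSpace.toDual ℝ E).symm f
  have hw : ∀ z, f z = inner ℝ w z := fun z ↦ by simp [w]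
  have hw0 : w ≠ 0 := by
    rintro h
    obtain ⟨k, hk⟩ := hΩ0
    have := hf k hk
    rw [hw, hw, h, inner_zero_left, inner_zero_left] at this
    exact lt_irrefl _ this
  obtain ⟨t, ht, i, hi⟩ :=
    exists_add_smul_mem_disjointFacet hP (hΩP (frontier_subset_closure hx)) hw0
  refine ⟨x + t • w, mem_iUnion.2 ⟨i, hi⟩, fun z hz ↦ ?_⟩
  have hz' : f z ≤ f x := closure_minimal (fun y hy ↦ (hf y hy).le)
    (isClosed_le f.continuous continuous_const) (frontier_subset_closure hz)
  rw [add_sub_cancel_left, real_inner_smul_left, inner_sub_right, ← hw, ← hw]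
  exact mul_nonpos_of_nonneg_of_nonpos ht (by linarith)

/-- The boundary of a polyhedron is not larger than that of a ball containing it. -/
lemma hausdorffMeasure_iUnion_disjointFacet_le {E : Type*} [NormedAddCommGroup E]
    [InnerProductSpace ℝ E] [MeasurableSpace E] [BorelSpace E] {N : ℕ} {ν : Fin N → E}
    {b : Fin N → ℝ} (hν : ∀ i, ‖ν i‖ = 1) {r : ℝ} (hP : polyhedron ν b ⊆ ball 0 r)
    {d : ℝ} (hd : 0 ≤ d) :
    μH[d] (⋃ i, disjointFacet ν b i) ≤ μH[d] (sphere (0 : E) r) := by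
  refine hausdorffMeasure_le_of_normal_translate hd fun x hx ↦ ?_
  obtain ⟨i, hi⟩ := mem_iUnion.1 hx
  have hxr : ‖x‖ < r := mem_ball_zero_iff.1 (hP hi.1)
  have hr0 : 0 ≤ 2 * r := by linarith [norm_nonneg x]
  have hcont : ContinuousOn (fun t : ℝ ↦ ‖x + t • ν i‖) (Icc 0 (2 * r)) :=
    Continuous.continuousOn (by fun_prop)
  have hfar : r ≤ ‖x + (2 * r) • ν i‖ := by
    have h1 : ‖(2 * r) • ν i‖ ≤ ‖x + (2 * r) • ν i‖ + ‖x‖ := by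
      simpa using norm_sub_le (x + (2 * r) • ν i) x
    rw [norm_smul, hν, Real.norm_of_nonneg hr0] at h1
    linarith
  obtain ⟨t, ht, htr⟩ := intermediate_value_Icc hr0 hcont ⟨by simpa using hxr.le, hfar⟩
  refine ⟨x + t • ν i, by simpa using htr, fun z hz ↦ ?_⟩
  obtain ⟨j, hj⟩ := mem_iUnion.1 hz
  rw [add_sub_cancel_left, real_inner_smul_left, inner_sub_right, hi.2.1]
  exact mul_nonpos_of_nonneg_of_nonpos ht.1 (by linarith [hj.1 i])

open scoped Pointwise in
lemma hausdorffMeasure_sphere_zero {E : Type*} [NormedAddCommGroup E] [NormedSpace ℝ E]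
    [MeasurableSpace E] [BorelSpace E] (n : ℕ) {r : ℝ} (hr : 0 < r) :
    μH[(n : ℝ)] (sphere (0 : E) r) = ENNReal.ofReal (r ^ n) * μH[(n : ℝ)] (sphere (0 : E) 1) := by
  have h : sphere (0 : E) r = r • sphere (0 : E) 1 := by
    rw [_root_.smul_sphere' hr.ne']
    simp [abs_of_pos hr]
  rw [h, Measure.hausdorffMeasure_smul₀ (by positivity) hr.ne', ENNReal.smul_def, smul_eq_mul,
    NNReal.rpow_natCast, ENNReal.ofReal_pow hr.le, ENNReal.coe_pow]
  congr 2
  rw [← Real.toNNReal_eq_nnnorm_of_nonneg hr.le]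
  rfl

lemma hausdorffMeasure_frontier_le_approx {n : ℕ} {Ω : Set (EuclideanSpace ℝ (Fin (n + 1)))}
    (hΩo : IsOpen Ω) (hΩc : Convex ℝ Ω) (hΩb : Bornology.IsBounded Ω) (hΩ0 : Ω.Nonempty)
    {ε : ℝ} (hε : 0 < ε) :
    μH[(n : ℝ)] (frontier Ω) ≤ μH[(n : ℝ)] (sphere (0 : EuclideanSpace ℝ (Fin (n + 1))) 1) *
      ENNReal.ofReal ((1 + ε) ^ n * ((diam Ω + 2 * ε) / 2) ^ n) := by
  obtain ⟨C, L, hC0, hCt, hCL⟩ := exists_cauchy_constants n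
  have hn : (0 : ℝ) ≤ n := n.cast_nonneg
  obtain ⟨N, ν, b, hν, hKP, hPU⟩ := exists_polyhedron_between hΩb.isCompact_closure hΩc.closure
    hΩ0.closure isOpen_thickening hΩb.closure.thickening (self_subset_thickening hε (closure Ω))
  obtain ⟨M, ξ, a, hξ, hBQ, hQU⟩ := exists_polyhedron_between
    (isCompact_closedBall (0 : EuclideanSpace ℝ (Fin (n + 1))) 1) (convex_closedBall _ _)
    ⟨0, by simp⟩ isOpen_ball isBounded_ball
    (closedBall_subset_ball (show (1 : ℝ) < 1 + ε by linarith))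
  have hPb := hΩb.closure.thickening.subset hPU
  have hdiam : diam (polyhedron ν b) ≤ diam Ω + 2 * ε := by
    refine (diam_mono hPU hΩb.closure.thickening).trans ?_
    simpa [diam_closure] using diam_thickening_le (closure Ω) hε.le
  have h1 := (hCL N ν b hν hPb).1
  have h2 := (hCL M ξ a hξ (isBounded_ball.subset hQU)).2 hBQ
  have h3 := hausdorffMeasure_frontier_le hΩo hΩc hΩ0 hPb (fun k hk i ↦ (hKP k hk i).le) hn
  have h4 := hausdorffMeasure_iUnion_disjointFacet_le hξ hQU hn
  rw [hausdorffMeasure_sphere_zero n (by linarith)] at h4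
  refine (ENNReal.mul_le_mul_iff_right hC0 hCt).1 ?_
  calc C * μH[(n : ℝ)] (frontier Ω) ≤ C * μH[(n : ℝ)] (⋃ i, disjointFacet ν b i) := by gcongr
    _ ≤ L * ENNReal.ofReal ((diam (polyhedron ν b) / 2) ^ n) := h1
    _ ≤ C * (ENNReal.ofReal ((1 + ε) ^ n) * μH[(n : ℝ)] (sphere (0 : EuclideanSpace ℝ (Fin (n + 1))) 1)) *
        ENNReal.ofReal (((diam Ω + 2 * ε) / 2) ^ n) := by
      gcongr
      exact h2.trans (mul_le_mul_right h4 C)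
    _ = _ := by
      rw [ENNReal.ofReal_mul (by positivity)]
      ring

/-- Rosenthal-Szász type isodiametric inequality for the perimeter of bounded convex sets:
`|∂Ω| ≤ |𝕊^n| diam(Ω)^n / 2^n`, with equality for the unit ball. -/
theorem rosenthal_szasz_perimeter
    (n : ℕ) (hn : 1 ≤ n)
    (Ω : Set (EuclideanSpace ℝ (Fin (n+1))))
    (hΩo : IsOpen Ω) (hΩc : Convex ℝ Ω) (hΩb : Bornology.IsBounded Ω) :
    μH[(n:ℝ)] (frontier Ω)
      ≤ μH[(n:ℝ)] (sphere (0 : EuclideanSpace ℝ (Fin (n+1))) 1) *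
          ENNReal.ofReal (Metric.diam Ω ^ n / 2 ^ n)
    ∧ (μH[(n:ℝ)] (frontier (ball (0 : EuclideanSpace ℝ (Fin (n+1))) 1))).toReal
        / Metric.diam (ball (0 : EuclideanSpace ℝ (Fin (n+1))) 1) ^ n
      = (μH[(n:ℝ)] (sphere (0 : EuclideanSpace ℝ (Fin (n+1))) 1)).toReal / 2 ^ n := by
  constructor
  · rcases Ω.eq_empty_or_nonempty with rfl | hΩ0
    · simp
    have hpos : 0 < diam Ω := by
      obtain ⟨x, hx⟩ := hΩ0
      obtain ⟨r, hr, hrΩ⟩ := Metric.isOpen_iff.1 hΩo x hx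
      refine lt_of_lt_of_le ?_ (diam_mono hrΩ hΩb)
      rw [diam_ball_eq x hr.le]
      positivity
    have hlim : Tendsto (fun ε : ℝ ↦ ENNReal.ofReal ((1 + ε) ^ n * ((diam Ω + 2 * ε) / 2) ^ n))
        (nhdsWithin 0 (Ioi 0)) (nhds (ENNReal.ofReal (diam Ω ^ n / 2 ^ n))) := by
      refine Tendsto.mono_left ?_ nhdsWithin_le_nhds
      have hcont : Continuous fun ε : ℝ ↦
          ENNReal.ofReal ((1 + ε) ^ n * ((diam Ω + 2 * ε) / 2) ^ n) :=
        ENNReal.continuous_ofReal.comp (by fun_prop)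
      convert hcont.tendsto 0 using 3
      simp [div_pow]
    refine ge_of_tendsto (ENNReal.Tendsto.const_mul hlim (Or.inl ?_)) ?_
    · exact (ENNReal.ofReal_pos.2 (by positivity)).ne'
    · filter_upwards [self_mem_nhdsWithin] with ε hε
      exact hausdorffMeasure_frontier_le_approx hΩo hΩc hΩb hΩ0 hε
  · rw [frontier_ball _ one_ne_zero, diam_ball_eq _ zero_le_one, mul_one]
end

section
/- Let n ≥ 1 be an integer, let α ∈ (0,1), s ∈ (0,1), p ≥ 1 with n > sp, and let Ω ⊂ ℝ^{n+1} be an open convex set. Let u : ∂Ω → ℝ be a bounded, non-negative, μH[n]-measurable function with compact support, and for i ∈ ℤ set a_i := |{x ∈ ∂Ω : u(x) > 2^i}|. Then there exists a constant c > 0, depending only on n, α, s, and p, such that (1/2) ∫_{∂Ω} ∫_{∂Ω} |u(x) − u(y)|^p / |x − y|^{n+sp} dx dy + ∫_{∂Ω} H_α(x)^{sp/α} u(x)^p dx ≥ c · Σ_{i∈ℤ, a_{i−1} ≠ 0} 2^{pi} a_{i−1}^{−sp/n} a_i, where the left-hand side is taken in [0, +∞]. -/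
open MeasureTheory Set Filter Metric
open scoped ENNReal NNReal

/-- The truncated integral defining the fractional `α`-mean curvature of `Ω` at `x`. -/
noncomputable def fracMCIntegral (n : ℕ) (α : ℝ) (Ω : Set (EuclideanSpace ℝ (Fin (n+1))))
    (x : EuclideanSpace ℝ (Fin (n+1))) (ε : ℝ) : ℝ :=
  (α/2) * ∫ y in {y : EuclideanSpace ℝ (Fin (n+1)) | ε < dist y x},
      ((Ωᶜ.indicator (fun _ => (1:ℝ)) y) - (Ω.indicator (fun _ => (1:ℝ)) y))
        * (dist y x) ^ (-((n:ℝ)+1+α)) ∂volume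

/-- `h` is the fractional `α`-mean curvature of `Ω` at `x` (principal value limit). -/
def IsFracMeanCurv (n : ℕ) (α : ℝ) (Ω : Set (EuclideanSpace ℝ (Fin (n+1))))
    (x : EuclideanSpace ℝ (Fin (n+1))) (h : ℝ) : Prop :=
  Filter.Tendsto (fracMCIntegral n α Ω x) (nhdsWithin 0 (Set.Ioi 0)) (nhds h)


theorem integrableOn_dist_rpow_neg {E : Type*} [NormedAddCommGroup E] [NormedSpace ℝ E]
    [FiniteDimensional ℝ E] [MeasurableSpace E] [BorelSpace E] (μ : Measure E)
    [μ.IsAddHaarMeasure] {q : ℝ} (hq : (Module.finrank ℝ E : ℝ) < q) (x : E) {ε : ℝ} (hε : 0 < ε) :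
    IntegrableOn (fun y => dist y x ^ (-q)) {y | ε < dist y x} μ := by
  have hq0 : 0 < q := lt_of_le_of_lt (Nat.cast_nonneg _) hq
  have h1 : Integrable (fun y => (ε / (1 + ε)) ^ (-q) * (1 + ‖y - x‖) ^ (-q)) μ :=
    ((integrable_one_add_norm hq).comp_sub_right x).const_mul _
  refine Integrable.mono' h1.integrableOn
    (Measurable.aestronglyMeasurable (by fun_prop)) ?_
  refine (ae_restrict_iff' (measurableSet_lt (by fun_prop) (by fun_prop))).2
    (Eventually.of_forall fun y hy => ?_)
  simp only [mem_ofPred_eq] at hy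
  rw [Real.norm_of_nonneg (by positivity), ← Real.mul_rpow (by positivity) (by positivity),
    ← dist_eq_norm]
  refine Real.rpow_le_rpow_of_nonpos (by positivity) ?_ (by linarith)
  rw [div_mul_eq_mul_div, div_le_iff₀ (by positivity)]
  nlinarith

/-- If a convex set `Ω` fills at most a quarter of a ball of radius `R` around a boundary point,
its fractional mean curvature there is at least of order `R ^ (-α)`. -/
theorem IsFracMeanCurv.le_of_volume_le {n : ℕ} {α : ℝ} (hα : 0 < α)
    {Ω : Set (EuclideanSpace ℝ (Fin (n + 1)))} (hΩo : IsOpen Ω) (hΩc : Convex ℝ Ω)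
    {x : EuclideanSpace ℝ (Fin (n + 1))} (hx : x ∉ Ω) {h : ℝ} (hh : IsFracMeanCurv n α Ω x h)
    {R : ℝ} (hR : 0 < R)
    (hvol : volume.real (Ω ∩ closedBall x R) ≤ volume.real (closedBall x R) / 4) :
    α / 2 * (R ^ (-((n : ℝ) + 1 + α)) * (volume.real (closedBall x R) / 4)) ≤ h := by
  set q : ℝ := (n : ℝ) + 1 + α with hq
  refine ge_of_tendsto hh ?_
  have hmem : Ioo (0 : ℝ) (R / 4) ∈ nhdsWithin (0 : ℝ) (Ioi 0) :=
    Ioo_mem_nhdsGT (by positivity)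
  filter_upwards [hmem] with ε hε
  unfold fracMCIntegral
  rw [← hq]
  refine mul_le_mul_of_nonneg_left ?_ (by positivity)
  set A := {y : EuclideanSpace ℝ (Fin (n + 1)) | ε < dist y x} with hA
  have hAm : MeasurableSet A := measurableSet_lt (by fun_prop) (by fun_prop)
  have hΩm : MeasurableSet Ω := hΩo.measurableSet
  set G : EuclideanSpace ℝ (Fin (n + 1)) → ℝ := A.indicator fun y =>
    (Ωᶜ.indicator (fun _ => (1 : ℝ)) y - Ω.indicator (fun _ => (1 : ℝ)) y) * dist y x ^ (-q) with hG
  have hGi : Integrable G := by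
    rw [hG, integrable_indicator_iff hAm]
    refine (integrableOn_dist_rpow_neg volume (q := q) (by simp [hq, hα]) x hε.1).mono' ?_ ?_
    · refine Measurable.aestronglyMeasurable (Measurable.mul (Measurable.sub ?_ ?_) (by fun_prop))
      · exact measurable_const.indicator hΩm.compl
      · exact measurable_const.indicator hΩm
    · refine Eventually.of_forall fun y => ?_
      rw [norm_mul, Real.norm_of_nonneg (by positivity : 0 ≤ dist y x ^ (-q))]
      refine mul_le_of_le_one_left (by positivity) ?_
      by_cases hy : y ∈ Ω <;> simp [hy]
  rw [← integral_indicator hAm]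
  change _ ≤ ∫ y, G y
  have hGr : Integrable fun y => G (x + x - y) := hGi.comp_sub_left (x + x)
  have hsymm : ∫ y, G (x + x - y) = ∫ y, G y := integral_sub_left_eq_self G volume (x + x)
  set B := closedBall x R
  have hBfin : volume B ≠ ⊤ := measure_closedBall_lt_top.ne
  have hεfin : volume (closedBall x ε) ≠ ⊤ := measure_closedBall_lt_top.ne
  have hind : ∀ S : Set (EuclideanSpace ℝ (Fin (n + 1))), MeasurableSet S → volume S ≠ ⊤ →
      Integrable (S.indicator fun _ => (1 : ℝ)) := fun S hS hf =>
    (integrable_indicator_iff hS).2 (integrableOn_const hf)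
  have hindI : ∀ S : Set (EuclideanSpace ℝ (Fin (n + 1))), MeasurableSet S →
      ∫ y, S.indicator (fun _ => (1 : ℝ)) y = volume.real S := fun S hS =>
    integral_indicator_one hS
  have hΩBm : MeasurableSet (Ω ∩ B) := hΩm.inter measurableSet_closedBall
  have hΩBfin : volume (Ω ∩ B) ≠ ⊤ := measure_ne_top_of_subset inter_subset_right hBfin
  have hi1 := hind B measurableSet_closedBall hBfin
  have hi2 := hind (closedBall x ε) measurableSet_closedBall hεfin
  have hi3 := hind (Ω ∩ B) hΩBm hΩBfin
  have hi4 : Integrable fun y => (Ω ∩ B).indicator (fun _ => (1 : ℝ)) (x + x - y) :=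
    hi3.comp_sub_left (x + x)
  classical
  have hpt : ∀ y, 2 * (R ^ (-q) * (B.indicator (fun _ => (1 : ℝ)) y
      - (closedBall x ε).indicator (fun _ => (1 : ℝ)) y
      - (Ω ∩ B).indicator (fun _ => (1 : ℝ)) y
      - (Ω ∩ B).indicator (fun _ => (1 : ℝ)) (x + x - y))) ≤ G y + G (x + x - y) := by
    intro y
    have hd : dist (x + x - y) x = dist y x := by
      rw [dist_eq_norm, dist_eq_norm, ← norm_neg]; congr 1; abel
    have hnot : y ∈ Ω → x + x - y ∉ Ω := fun h1 h2 => hx <| by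
      have := hΩc h1 h2 (a := 1 / 2) (b := 1 / 2) (by norm_num) (by norm_num) (by norm_num)
      rwa [← smul_add, add_sub_cancel, ← two_smul ℝ x, smul_smul, one_div,
        inv_mul_cancel₀ two_ne_zero, one_smul] at this
    have hRq : 0 ≤ R ^ (-q) := by positivity
    have hεR : ε < R := by linarith [hε.2]
    simp only [hG, indicator_apply, hA, mem_ofPred_eq, hd, mem_inter_iff, mem_compl_iff, B,
      mem_closedBall]
    by_cases h1 : ε < dist y x
    · have hpos : 0 < dist y x := hε.1.trans h1
      have hdq : 0 ≤ dist y x ^ (-q) := by positivity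
      by_cases h2 : dist y x ≤ R
      · have hle : R ^ (-q) ≤ dist y x ^ (-q) :=
          Real.rpow_le_rpow_of_nonpos hpos h2 (by rw [hq]; linarith [Nat.cast_nonneg (α := ℝ) n])
        by_cases h3 : y ∈ Ω
        · simp [h1, h2, h3, hnot h3, not_le.2 h1]
        · by_cases h4 : x + x - y ∈ Ω <;> simp [h1, h2, h3, h4, not_le.2 h1]
          linarith
      · by_cases h3 : y ∈ Ω
        · simp [h1, h2, h3, hnot h3, not_le.2 h1]
        · by_cases h4 : x + x - y ∈ Ω <;> simp [h1, h2, h3, h4, not_le.2 h1]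
          linarith
    · have h2 : dist y x ≤ R := by linarith
      simp only [h1, h2, not_lt.1 h1, if_true, if_false, and_true]
      split_ifs <;> simp <;> linarith
  have hi12 : Integrable fun y => B.indicator (fun _ => (1 : ℝ)) y
      - (closedBall x ε).indicator (fun _ => (1 : ℝ)) y := hi1.sub hi2
  have hi123 : Integrable fun y => B.indicator (fun _ => (1 : ℝ)) y
      - (closedBall x ε).indicator (fun _ => (1 : ℝ)) y
      - (Ω ∩ B).indicator (fun _ => (1 : ℝ)) y := hi12.sub hi3
  have hint := integral_mono
    ((hi123.sub hi4).const_mul (R ^ (-q)) |>.const_mul 2) (hGi.add hGr) hpt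
  simp only [Pi.add_apply, Pi.sub_apply] at hint
  rw [integral_add hGi hGr, hsymm, integral_const_mul, integral_const_mul,
    integral_sub hi123 hi4, integral_sub hi12 hi3, integral_sub hi1 hi2,
    integral_sub_left_eq_self (fun y => (Ω ∩ B).indicator (fun _ => (1 : ℝ)) y) volume (x + x),
    hindI _ measurableSet_closedBall, hindI _ measurableSet_closedBall, hindI _ hΩBm] at hint
  have hεvol : volume.real (closedBall x ε) ≤ volume.real B / 4 := by
    simp only [B]
    rw [Measure.addHaar_real_closedBall _ _ hε.1.le, Measure.addHaar_real_closedBall _ _ hR.le,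
      finrank_euclideanSpace_fin, mul_div_right_comm]
    refine mul_le_mul_of_nonneg_right ?_ measureReal_nonneg
    calc ε ^ (n + 1) ≤ (R / 4) ^ (n + 1) := pow_le_pow_left₀ hε.1.le hε.2.le _
      _ = R ^ (n + 1) / 4 ^ (n + 1) := div_pow _ _ _
      _ ≤ R ^ (n + 1) / 4 := by
        gcongr
        exact le_self_pow₀ (by norm_num) (by simp)
  have hfin : R ^ (-q) * (volume.real B / 4) ≤ R ^ (-q) * (volume.real B -
      volume.real (closedBall x ε) - volume.real (Ω ∩ B) - volume.real (Ω ∩ B)) := by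
    gcongr
    linarith
  linarith
theorem exists_add_smul_mem_frontier {E : Type*} [NormedAddCommGroup E] [InnerProductSpace ℝ E]
    {Ω : Set E} {x y ν : E} (hν : ‖ν‖ = 1) (hΩ : ∀ a ∈ Ω, inner ℝ ν (a - x) < 0)
    (hy : y ∈ interior Ω) :
    ∃ t : ℝ, y + t • ν ∈ frontier Ω ∧ dist (y + t • ν) x ≤ dist y x := by
  set T := -inner ℝ ν (y - x) with hT
  have hT0 : 0 < T := by have := hΩ y (interior_subset hy); linarith
  have hend : y + T • ν ∉ Ω := by
    intro h
    have := hΩ _ h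
    rw [add_sub_right_comm, inner_add_right, inner_smul_right, real_inner_self_eq_norm_sq, hν] at this
    linarith
  obtain ⟨z, hz, hzf⟩ : ∃ z ∈ segment ℝ y (y + T • ν), z ∈ frontier Ω := by
    by_contra! hcon
    have hend' : y + T • ν ∉ closure Ω := fun h =>
      hcon _ (right_mem_segment ℝ _ _) ⟨h, fun h' => hend (interior_subset h')⟩
    obtain ⟨z, -, hz, hz'⟩ := (convex_segment y (y + T • ν)).isPreconnected _ _
      isOpen_interior (isClosed_closure (s := Ω)).isOpen_compl
      (fun z hz => by
        by_contra h
        simp only [mem_union, mem_compl_iff, not_or, not_not] at h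
        exact hcon z hz ⟨h.2, h.1⟩)
      ⟨y, left_mem_segment ℝ _ _, hy⟩ ⟨_, right_mem_segment ℝ _ _, hend'⟩
    exact hz' (subset_closure (interior_subset hz))
  rw [segment_eq_image'] at hz
  obtain ⟨θ, ⟨h0, h1⟩, rfl⟩ := hz
  have e : y + θ • (y + T • ν - y) = y + (θ * T) • ν := by
    rw [add_sub_cancel_left, smul_smul]
  simp only [e] at hzf
  refine ⟨θ * T, hzf, ?_⟩
  rw [dist_eq_norm, dist_eq_norm, add_sub_right_comm]
  refine le_of_sq_le_sq ?_ (norm_nonneg _)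
  rw [norm_add_sq_real, norm_smul, hν, inner_smul_right, real_inner_comm, mul_one,
    Real.norm_eq_abs, sq_abs]
  have hI : inner ℝ ν (y - x) = -T := by rw [hT]; ring
  rw [hI]
  have : θ * T * T * (2 - θ) ≥ 0 := mul_nonneg (by positivity) (by linarith)
  nlinarith

/-- A convex set occupying a given volume in a ball around one of its boundary points
has correspondingly large boundary measure in that ball. -/
theorem volume_inter_closedBall_le_hausdorffMeasure_frontier {n : ℕ}
    {Ω : Set (EuclideanSpace ℝ (Fin (n + 1)))} (hΩo : IsOpen Ω) (hΩc : Convex ℝ Ω)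
    {x : EuclideanSpace ℝ (Fin (n + 1))} (hx : x ∈ frontier Ω) (R : ℝ) :
    volume (Ω ∩ closedBall x R) ≤
      ENNReal.ofReal (2 * R) * μH[(n : ℝ)] (frontier Ω ∩ closedBall x R) := by
  have hxΩ : x ∉ Ω := fun h => by
    rw [hΩo.frontier_eq] at hx; exact hx.2 h
  obtain ⟨f, hf⟩ := geometric_hahn_banach_open_point hΩc hΩo hxΩ
  set w := (InnerProductSpace.toDual ℝ _).symm f with hw
  have hwf : ∀ a, inner ℝ w a = f a := fun a => by
    rw [hw, InnerProductSpace.toDual_symm_apply]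
  have hne : Ω.Nonempty := by
    by_contra h
    rw [not_nonempty_iff_eq_empty] at h
    simp [h] at hx
  have hw0 : 0 < ‖w‖ := by
    rw [norm_pos_iff]
    rintro h0
    obtain ⟨a, ha⟩ := hne
    have := hf a ha
    rw [← hwf, ← hwf, h0] at this
    simp at this
  set ν := ‖w‖⁻¹ • w with hνdef
  have hν : ‖ν‖ = 1 := by
    rw [hνdef, norm_smul, norm_inv, norm_norm, inv_mul_cancel₀ hw0.ne']
  have hνΩ : ∀ a ∈ Ω, inner ℝ ν (a - x) < 0 := fun a ha => by
    rw [hνdef, real_inner_smul_left, inner_sub_right, hwf, hwf]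
    exact mul_neg_of_pos_of_neg (inv_pos.2 hw0) (sub_neg.2 (hf a ha))
  obtain ⟨b, hb⟩ := Orthonormal.exists_orthonormalBasis_extension_of_card_eq (𝕜 := ℝ)
    (E := EuclideanSpace ℝ (Fin (n + 1))) (ι := Fin (n + 1)) (by simp)
    (v := fun _ => ν) (s := {0}) (by
      constructor
      · rintro i; simpa using hν
      · rintro ⟨i, rfl⟩ ⟨j, rfl⟩ h; exact absurd rfl h)
  have hb0 : b 0 = ν := hb 0 rfl
  let proj : EuclideanSpace ℝ (Fin (n + 1)) → (Fin n → ℝ) := fun y j => inner ℝ (b j.succ) y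
  have hproj : LipschitzWith 1 proj := by
    refine LipschitzWith.of_dist_le_mul fun y z => ?_
    rw [NNReal.coe_one, one_mul, dist_pi_le_iff dist_nonneg]
    intro j
    rw [Real.dist_eq, ← inner_sub_right, dist_eq_norm]
    simpa [b.norm_eq_one] using abs_real_inner_le_norm (b j.succ) (y - z)
  let S := frontier Ω ∩ closedBall x R
  have hS : IsCompact S := (isCompact_closedBall x R).inter_left isClosed_frontier
  have hvol : volume (proj '' S) ≤ μH[(n : ℝ)] S := by
    have := hproj.hausdorffMeasure_image_le (d := n) (by positivity) S
    have h2 := hausdorffMeasure_pi_real (ι := Fin n)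
    rw [Fintype.card_fin] at h2
    simpa [h2] using this
  let Φ : EuclideanSpace ℝ (Fin (n + 1)) → ℝ × (Fin n → ℝ) :=
    MeasurableEquiv.piFinSuccAbove (fun _ => ℝ) 0 ∘ WithLp.ofLp ∘ b.repr
  have hΦ : MeasurePreserving Φ :=
    (volume_preserving_piFinSuccAbove (fun _ : Fin (n + 1) => ℝ) 0).comp
      ((PiLp.volume_preserving_ofLp (Fin (n + 1))).comp b.measurePreserving_repr)
  set I := Icc (inner ℝ ν x - R) (inner ℝ ν x + R)
  have hsub : Ω ∩ closedBall x R ⊆ Φ ⁻¹' (I ×ˢ (proj '' S)) := by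
    rintro y ⟨hy, hyR⟩
    have h1 : (Φ y).1 = inner ℝ ν y := by
      rw [← hb0, ← b.repr_apply_apply]; rfl
    have h2 : (Φ y).2 = proj y := by
      funext j
      change b.repr y (Fin.succAbove 0 j) = inner ℝ (b j.succ) y
      rw [b.repr_apply_apply, Fin.succAbove_zero]
    rw [mem_closedBall] at hyR
    refine ⟨?_, ?_⟩
    · have h3 : |inner ℝ ν (y - x)| ≤ R := by
        refine (abs_real_inner_le_norm _ _).trans ?_
        rwa [hν, one_mul, ← dist_eq_norm]
      rw [h1]
      rw [inner_sub_right, abs_le] at h3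
      constructor <;> linarith
    · rw [h2]
      obtain ⟨t, ht, htR⟩ := exists_add_smul_mem_frontier hν hνΩ (by rwa [hΩo.interior_eq])
      refine ⟨y + t • ν, ⟨ht, htR.trans hyR⟩, ?_⟩
      funext j
      have : inner ℝ (b j.succ) ν = 0 := by
        rw [← hb0]; exact b.orthonormal.2 (Fin.succ_ne_zero j)
      simp only [proj]
      rw [inner_add_right, inner_smul_right, this, mul_zero, add_zero]
  calc volume (Ω ∩ closedBall x R) ≤ _ := measure_mono hsub
    _ = volume (I ×ˢ (proj '' S)) := hΦ.measure_preimage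
        (measurableSet_Icc.prod (hS.image hproj.continuous).measurableSet).nullMeasurableSet
    _ = ENNReal.ofReal (2 * R) * volume (proj '' S) := by
        rw [Measure.volume_eq_prod, Measure.prod_prod, Real.volume_Icc]
        ring_nf
    _ ≤ _ := by gcongr

/-- Nonlocal isoperimetric-type bound: for a boundary point `x` of a convex set and `E ∋ x` of
finite positive boundary measure, the interaction of `x` with the complement of `E` together with
a power of the fractional mean curvature at `x` is at least of order `|E| ^ (-σ / n)`. -/
theorem exists_const_le_lintegral_diff_add_curvature {n : ℕ} (hn : 1 ≤ n) {α σ : ℝ} (hα : 0 < α)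
    (hσ : 0 < σ) :
    ∃ c : ℝ, 0 < c ∧ ∀ Ω : Set (EuclideanSpace ℝ (Fin (n + 1))), IsOpen Ω → Convex ℝ Ω →
      ∀ x ∈ frontier Ω, ∀ h : ℝ, IsFracMeanCurv n α Ω x h →
      ∀ E : Set (EuclideanSpace ℝ (Fin (n + 1))), MeasurableSet E → x ∈ E →
        (μH[(n : ℝ)] E).toReal ≠ 0 →
        ENNReal.ofReal (c * (μH[(n : ℝ)] E).toReal ^ (-σ / (n : ℝ))) ≤
          (∫⁻ y in frontier Ω \ E, ENNReal.ofReal (1 / dist x y ^ ((n : ℝ) + σ)) ∂μH[(n : ℝ)])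
            + ENNReal.ofReal (h ^ (σ / α)) := by
  have hn0 : (0 : ℝ) < n := by exact_mod_cast hn
  set ω : ℝ := volume.real (ball (0 : EuclideanSpace ℝ (Fin (n + 1))) 1) with hωdef
  have hω : 0 < ω := ENNReal.toReal_pos (measure_ball_pos _ _ one_pos).ne' measure_ball_lt_top.ne
  refine ⟨min (ω / 16) ((α * ω / 8) ^ (σ / α)) * (16 / ω) ^ (-σ / (n : ℝ)), by positivity, ?_⟩
  intro Ω hΩo hΩc x hx h hh E hE hxE hE0
  set m := (μH[(n : ℝ)] E).toReal with hm
  have hm0 : 0 < m := lt_of_le_of_ne ENNReal.toReal_nonneg hE0.symm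
  have hEfin : μH[(n : ℝ)] E ≠ ⊤ := fun h => hE0 (by rw [hm, h, ENNReal.toReal_top])
  have hxΩ : x ∉ Ω := fun h => by
    rw [hΩo.frontier_eq] at hx; exact hx.2 h
  set R := (16 / ω * m) ^ (1 / (n : ℝ)) with hRdef
  have hR : 0 < R := by positivity
  have hRn : R ^ n = 16 / ω * m := by
    rw [hRdef, ← Real.rpow_natCast, ← Real.rpow_mul (by positivity), one_div_mul_cancel hn0.ne',
      Real.rpow_one]
  have hRσ : R ^ (-σ) = (16 / ω) ^ (-σ / (n : ℝ)) * m ^ (-σ / (n : ℝ)) := by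
    rw [hRdef, ← Real.rpow_mul (by positivity), ← Real.mul_rpow (by positivity) hm0.le]
    congr 1; ring
  have hball : volume.real (closedBall x R) = R ^ (n + 1) * ω := by
    rw [Measure.addHaar_real_closedBall _ _ hR.le, finrank_euclideanSpace_fin]
  rw [mul_assoc, ← hRσ]
  by_cases hvol : volume.real (Ω ∩ closedBall x R) ≤ volume.real (closedBall x R) / 4
  · refine le_trans (ENNReal.ofReal_le_ofReal ?_) le_add_self
    have h1 := hh.le_of_volume_le hα hΩo hΩc hxΩ hR hvol
    have h2 : α / 2 * (R ^ (-((n : ℝ) + 1 + α)) * (volume.real (closedBall x R) / 4))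
        = α * ω / 8 * R ^ (-α) := by
      rw [hball, neg_add, Real.rpow_add hR, Real.rpow_neg hR.le ((n : ℝ) + 1)]
      have : R ^ ((n : ℝ) + 1) = R ^ (n + 1) := by
        rw [← Real.rpow_natCast]; push_cast; rfl
      rw [this]
      field_simp
      ring
    rw [h2] at h1
    calc min (ω / 16) ((α * ω / 8) ^ (σ / α)) * R ^ (-σ)
        ≤ (α * ω / 8) ^ (σ / α) * R ^ (-σ) := by gcongr; exact min_le_right _ _
      _ = (α * ω / 8 * R ^ (-α)) ^ (σ / α) := by
        rw [Real.mul_rpow (by positivity) (by positivity), ← Real.rpow_mul hR.le]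
        congr 2; field_simp
      _ ≤ h ^ (σ / α) := by gcongr
  · push Not at hvol
    refine le_trans ?_ le_self_add
    set S := frontier Ω ∩ closedBall x R with hS
    have hSm : MeasurableSet S := isClosed_frontier.measurableSet.inter measurableSet_closedBall
    have hSvol : ENNReal.ofReal (2 * m) ≤ μH[(n : ℝ)] S := by
      have h1 := volume_inter_closedBall_le_hausdorffMeasure_frontier hΩo hΩc hx R
      have h2 : ENNReal.ofReal (volume.real (closedBall x R) / 4) ≤
          volume (Ω ∩ closedBall x R) :=
        (ENNReal.ofReal_le_ofReal hvol.le).trans ENNReal.ofReal_toReal_le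
      have h3 : volume.real (closedBall x R) / 4 = 2 * R * (2 * m) := by
        rw [hball, pow_succ, hRn]; field_simp; ring
      rw [h3, ENNReal.ofReal_mul (by positivity)] at h2
      exact (ENNReal.mul_le_mul_iff_right (by simpa using hR) ENNReal.ofReal_ne_top).1
        (h2.trans h1)
    have hdiff : ENNReal.ofReal m ≤ μH[(n : ℝ)] (S \ E) := by
      refine le_trans ?_ le_measure_sdiff
      refine ENNReal.le_sub_of_add_le_right hEfin (le_trans ?_ hSvol)
      rw [← ENNReal.ofReal_toReal hEfin, ← hm, ← ENNReal.ofReal_add hm0.le hm0.le, two_mul]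
    calc ENNReal.ofReal (min (ω / 16) ((α * ω / 8) ^ (σ / α)) * R ^ (-σ))
        ≤ ENNReal.ofReal (1 / R ^ ((n : ℝ) + σ) * m) := by
          refine ENNReal.ofReal_le_ofReal ?_
          have h1 : 1 / R ^ ((n : ℝ) + σ) * m = ω / 16 * R ^ (-σ) := by
            rw [Real.rpow_add hR, Real.rpow_natCast, hRn, Real.rpow_neg hR.le]
            field_simp
          rw [h1]
          gcongr
          exact min_le_left _ _
      _ = ENNReal.ofReal (1 / R ^ ((n : ℝ) + σ)) * ENNReal.ofReal m :=
          ENNReal.ofReal_mul (by positivity)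
      _ ≤ ENNReal.ofReal (1 / R ^ ((n : ℝ) + σ)) * μH[(n : ℝ)] (S \ E) := by gcongr
      _ = ∫⁻ _ in S \ E, ENNReal.ofReal (1 / R ^ ((n : ℝ) + σ)) ∂μH[(n : ℝ)] :=
          (setLIntegral_const _ _).symm
      _ ≤ ∫⁻ y in S \ E, ENNReal.ofReal (1 / dist x y ^ ((n : ℝ) + σ)) ∂μH[(n : ℝ)] := by
          refine setLIntegral_mono' (hSm.diff hE) fun y hy => ENNReal.ofReal_le_ofReal ?_
          have hxy : 0 < dist x y := dist_pos.2 fun e => hy.2 (e ▸ hxE)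
          have hyR : dist x y ≤ R := by rw [dist_comm]; exact hy.1.2
          gcongr
      _ ≤ _ := lintegral_mono_set (sdiff_subset_sdiff_left inter_subset_left)

theorem sum_two_rpow_le {p : ℝ} (hp : 1 ≤ p) (t : Finset ℤ) :
    ∀ v : ℝ, 0 ≤ v → (∀ i ∈ t, (2 : ℝ) ^ i ≤ v) →
      ∑ i ∈ t, (2 : ℝ) ^ (p * (i : ℝ)) ≤ 2 * v ^ p := by
  have hzp : ∀ i : ℤ, (2 : ℝ) ^ (p * (i : ℝ)) = ((2 : ℝ) ^ i) ^ p := fun i => by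
    rw [mul_comm, Real.rpow_mul (by norm_num), Real.rpow_intCast]
  induction t using Finset.induction_on_max with
  | empty => intro v hv _; simp; positivity
  | insert a t ht ih =>
    intro v hv hle
    rw [Finset.sum_insert fun h => (ht a h).false]
    have h1 := ih ((2 : ℝ) ^ (a - 1)) (by positivity) fun i hi =>
      zpow_le_zpow_right₀ (by norm_num) (by have := ht i hi; omega)
    have h2 : 2 * ((2 : ℝ) ^ (a - 1)) ^ p ≤ (2 : ℝ) ^ (p * (a : ℝ)) := by
      rw [hzp, show (2 : ℝ) ^ a = 2 * 2 ^ (a - 1) by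
        rw [zpow_sub_one₀ two_ne_zero]; ring, Real.mul_rpow (by norm_num) (by positivity)]
      gcongr
      exact Real.self_le_rpow_of_one_le (by norm_num) hp
    have h3 : (2 : ℝ) ^ (p * (a : ℝ)) ≤ v ^ p := by
      rw [hzp]
      exact Real.rpow_le_rpow (by positivity) (hle a (Finset.mem_insert_self _ _)) (by linarith)
    linarith

theorem finset_sum_lintegral_le {β ι : Type*} [MeasurableSpace β] (μ : Measure β) (t : Finset ι)
    (f : ι → β → ℝ≥0∞) : ∑ i ∈ t, ∫⁻ x, f i x ∂μ ≤ ∫⁻ x, ∑ i ∈ t, f i x ∂μ := by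
  classical
  induction t using Finset.induction_on with
  | empty => simp
  | insert a t ha ih =>
    simp only [Finset.sum_insert ha]
    exact (add_le_add_right ih _).trans (le_lintegral_add _ _)

theorem ofReal_sum_level_le {p A B : ℝ} (hp : 1 ≤ p) (t : Finset ℤ) (hA : 0 ≤ A)
    (hAB : ∀ i ∈ t, (2 : ℝ) ^ i ≤ A) (hB : 2 * A ^ p ≤ B) :
    ∑ i ∈ t, ENNReal.ofReal ((2 : ℝ) ^ (p * (i : ℝ))) ≤ ENNReal.ofReal B := by
  rw [← ENNReal.ofReal_sum_of_nonneg fun i _ => by positivity]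
  exact ENNReal.ofReal_le_ofReal ((sum_two_rpow_le hp t A hA hAB).trans hB)

/-- Slicing lemma: the Gagliardo energy on `∂Ω` plus the weighted `L^p` term controls
the dyadic sum `Σ 2^{pi} a_{i-1}^{-sp/n} a_i`, where `a_i = |{u > 2^i}|`. -/
theorem slicing_lower_bound_convex
    (n : ℕ) (hn : 1 ≤ n) (α s p : ℝ)
    (hα : α ∈ Set.Ioo (0:ℝ) 1) (hs : s ∈ Set.Ioo (0:ℝ) 1) (hp : 1 ≤ p)
    (hnsp : (n:ℝ) > s * p) :
    ∃ c : ℝ, 0 < c ∧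
      ∀ (Ω : Set (EuclideanSpace ℝ (Fin (n+1)))), IsOpen Ω → Convex ℝ Ω →
      ∀ (Hα : EuclideanSpace ℝ (Fin (n+1)) → ℝ), Measurable Hα →
        (∀ x ∈ frontier Ω, 0 ≤ Hα x) →
        (∀ᵐ x ∂(μH[(n:ℝ)].restrict (frontier Ω)), IsFracMeanCurv n α Ω x (Hα x)) →
      ∀ (u : EuclideanSpace ℝ (Fin (n+1)) → ℝ), Measurable u →
        (∀ x, 0 ≤ u x) → (∃ B : ℝ, ∀ x, u x ≤ B) →
        (∃ K : Set (EuclideanSpace ℝ (Fin (n+1))), IsCompact K ∧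
          ∀ x ∈ frontier Ω, x ∉ K → u x = 0) →
        (1/2) * (∫⁻ x in frontier Ω, ∫⁻ y in frontier Ω,
              ENNReal.ofReal (|u x - u y| ^ p / dist x y ^ ((n:ℝ) + s * p))
                ∂μH[(n:ℝ)] ∂μH[(n:ℝ)])
          + ∫⁻ x in frontier Ω,
              ENNReal.ofReal (Hα x ^ (s * p / α) * u x ^ p) ∂μH[(n:ℝ)]
          ≥ ENNReal.ofReal (c * ∑' i : ℤ,
              if (μH[(n:ℝ)] {x | x ∈ frontier Ω ∧ (2:ℝ) ^ (i - 1) < u x}).toReal ≠ 0 then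
                (2:ℝ) ^ (p * (i:ℝ)) *
                  (μH[(n:ℝ)] {x | x ∈ frontier Ω ∧ (2:ℝ) ^ (i - 1) < u x}).toReal
                    ^ (-(s * p) / (n:ℝ)) *
                  (μH[(n:ℝ)] {x | x ∈ frontier Ω ∧ (2:ℝ) ^ i < u x}).toReal
              else 0) := by
  have hn0 : (0 : ℝ) < n := by exact_mod_cast hn
  have hσ : 0 < s * p := mul_pos hs.1 (by linarith)
  obtain ⟨c₀, hc₀, hkey⟩ := exists_const_le_lintegral_diff_add_curvature hn hα.1 hσ
  refine ⟨c₀ / (4 * 2 ^ p), by positivity, ?_⟩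
  intro Ω hΩo hΩc H hHm hH0 hHcurv u hum hu0 _ _
  set F := frontier Ω with hF
  have hFm : MeasurableSet F := isClosed_frontier.measurableSet
  set D : ℤ → Set (EuclideanSpace ℝ (Fin (n + 1))) := fun i => {x | x ∈ F ∧ (2 : ℝ) ^ i < u x}
    with hD
  have hDm : ∀ i, MeasurableSet (D i) := fun i =>
    hFm.inter (measurableSet_lt measurable_const hum)
  have hDF : ∀ i, D i ⊆ F := fun i x hx => hx.1
  set T : ℤ → ℝ := fun i =>
    if (μH[(n:ℝ)] (D (i - 1))).toReal ≠ 0 then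
      (2:ℝ) ^ (p * (i:ℝ)) * (μH[(n:ℝ)] (D (i - 1))).toReal ^ (-(s * p) / (n:ℝ)) *
        (μH[(n:ℝ)] (D i)).toReal
    else 0 with hT
  have hT0 : ∀ i, 0 ≤ T i := fun i => by
    simp only [hT]; split_ifs <;> positivity
  change ENNReal.ofReal (c₀ / (4 * 2 ^ p) * ∑' i, T i) ≤ _
  by_cases hsum : Summable T
  swap
  · rw [tsum_eq_zero_of_not_summable hsum]; simp
  set w : ℤ → ℝ≥0∞ := fun i => ENNReal.ofReal ((2 : ℝ) ^ (p * (i : ℝ))) with hw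
  set k : EuclideanSpace ℝ (Fin (n + 1)) → EuclideanSpace ℝ (Fin (n + 1)) → ℝ≥0∞ :=
    fun x y => ENNReal.ofReal (1 / dist x y ^ ((n : ℝ) + s * p)) with hk
  set h' : EuclideanSpace ℝ (Fin (n + 1)) → ℝ≥0∞ := fun x => ENNReal.ofReal (H x ^ (s * p / α))
    with hh'
  have hh'm : Measurable h' := by fun_prop
  have hterm : ∀ i, ENNReal.ofReal (c₀ * T i) ≤
      (∫⁻ x in F, (D i).indicator (fun x => w i * ∫⁻ y in F \ D (i - 1), k x y ∂μH[(n : ℝ)]) x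
        ∂μH[(n : ℝ)])
      + ∫⁻ x in F, (D i).indicator (fun x => w i * h' x) x ∂μH[(n : ℝ)] := by
    intro i
    by_cases hi : (μH[(n:ℝ)] (D (i - 1))).toReal ≠ 0
    swap
    · simp only [hT, if_neg hi, mul_zero, ENNReal.ofReal_zero, zero_le]
    rw [setLIntegral_indicator (hDm i), setLIntegral_indicator (hDm i),
      inter_eq_left.2 (hDF i), ← lintegral_add_right _ (hh'm.const_mul _)]
    simp only [hT, if_pos hi]
    calc ENNReal.ofReal (c₀ * ((2:ℝ) ^ (p * (i:ℝ)) *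
          (μH[(n:ℝ)] (D (i - 1))).toReal ^ (-(s * p) / (n:ℝ)) * (μH[(n:ℝ)] (D i)).toReal))
        = w i * ENNReal.ofReal (c₀ * (μH[(n:ℝ)] (D (i - 1))).toReal ^ (-(s * p) / (n:ℝ)))
          * ENNReal.ofReal (μH[(n:ℝ)] (D i)).toReal := by
          rw [← ENNReal.ofReal_mul (by positivity), ← ENNReal.ofReal_mul (by positivity)]
          congr 1; ring
      _ ≤ w i * ENNReal.ofReal (c₀ * (μH[(n:ℝ)] (D (i - 1))).toReal ^ (-(s * p) / (n:ℝ)))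
          * μH[(n:ℝ)] (D i) := by gcongr; exact ENNReal.ofReal_toReal_le
      _ = ∫⁻ _ in D i, w i *
          ENNReal.ofReal (c₀ * (μH[(n:ℝ)] (D (i - 1))).toReal ^ (-(s * p) / (n:ℝ)))
            ∂μH[(n : ℝ)] := (setLIntegral_const _ _).symm
      _ ≤ _ := by
          refine setLIntegral_mono_ae' (hDm i) ?_
          filter_upwards [(ae_restrict_iff' hFm).1 hHcurv] with x hx hxD
          rw [← mul_add]
          gcongr
          refine hkey Ω hΩo hΩc x (hDF i hxD) (H x) (hx (hDF i hxD)) (D (i - 1)) (hDm _)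
            ⟨hxD.1, lt_of_le_of_lt ?_ hxD.2⟩ hi
          exact zpow_le_zpow_right₀ (by norm_num) (by omega)
  have hGag : ∀ t : Finset ℤ, ∑ i ∈ t, (∫⁻ x in F,
        (D i).indicator (fun x => w i * ∫⁻ y in F \ D (i - 1), k x y ∂μH[(n : ℝ)]) x ∂μH[(n : ℝ)])
      ≤ ENNReal.ofReal (2 * 2 ^ p) * ∫⁻ x in F, ∫⁻ y in F,
          ENNReal.ofReal (|u x - u y| ^ p / dist x y ^ ((n:ℝ) + s * p))
            ∂μH[(n:ℝ)] ∂μH[(n:ℝ)] := by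
    intro t
    rw [← lintegral_const_mul' _ _ ENNReal.ofReal_ne_top]
    refine (finset_sum_lintegral_le _ t _).trans (setLIntegral_mono' hFm fun x hx => ?_)
    rw [← lintegral_const_mul' _ _ ENNReal.ofReal_ne_top]
    have hin : ∀ i, (D i).indicator
        (fun x => w i * ∫⁻ y in F \ D (i - 1), k x y ∂μH[(n : ℝ)]) x =
        ∫⁻ y in F, (D (i - 1))ᶜ.indicator (fun y => (D i).indicator (fun x => w i * k x y) x) y
          ∂μH[(n : ℝ)] := by
      intro i
      rw [setLIntegral_indicator (hDm _).compl, inter_comm, ← sdiff_eq]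
      by_cases hxi : x ∈ D i
      · simp only [indicator_of_mem hxi]
        rw [lintegral_const_mul' _ _ ENNReal.ofReal_ne_top]
      · simp [indicator_of_notMem hxi]
    simp only [hin]
    refine (finset_sum_lintegral_le _ t _).trans (setLIntegral_mono' hFm fun y hy => ?_)
    classical
    simp only [indicator_apply, ← ite_and]
    rw [← Finset.sum_filter, ← Finset.sum_mul, div_eq_mul_one_div,
      ENNReal.ofReal_mul (p := |u x - u y| ^ p) (by positivity), ← mul_assoc]
    gcongr
    rw [← ENNReal.ofReal_mul (by positivity)]
    refine ofReal_sum_level_le (A := 2 * |u x - u y|) hp _ (by positivity) (fun i hi => ?_) ?_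
    · obtain ⟨-, hyi, hxi⟩ := Finset.mem_filter.1 hi
      have h1 : u y ≤ (2 : ℝ) ^ (i - 1) := not_lt.1 fun h => hyi ⟨hy, h⟩
      have h2 : (2 : ℝ) ^ i < u x := hxi.2
      rw [zpow_sub_one₀ two_ne_zero] at h1
      have h3 := le_abs_self (u x - u y)
      linarith
    · rw [Real.mul_rpow (by norm_num) (abs_nonneg _), mul_assoc]
  have hCurv : ∀ t : Finset ℤ,
      ∑ i ∈ t, (∫⁻ x in F, (D i).indicator (fun x => w i * h' x) x ∂μH[(n : ℝ)])
      ≤ 2 * ∫⁻ x in F, ENNReal.ofReal (H x ^ (s * p / α) * u x ^ p) ∂μH[(n:ℝ)] := by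
    intro t
    rw [← lintegral_const_mul' _ _ (by simp)]
    refine (finset_sum_lintegral_le _ t _).trans (setLIntegral_mono' hFm fun x hx => ?_)
    classical
    simp only [indicator_apply]
    have hHx := hH0 x hx
    have hux := hu0 x
    rw [← Finset.sum_filter, ← Finset.sum_mul, mul_comm (H x ^ _),
      ENNReal.ofReal_mul (by positivity), ← mul_assoc,
      show (2 : ℝ≥0∞) = ENNReal.ofReal 2 by simp, ← ENNReal.ofReal_mul (by positivity)]
    gcongr
    exact ofReal_sum_level_le hp _ hux (fun i hi => (Finset.mem_filter.1 hi).2.2.le) le_rfl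
  set X := ∫⁻ x in F, ∫⁻ y in F,
          ENNReal.ofReal (|u x - u y| ^ p / dist x y ^ ((n:ℝ) + s * p))
            ∂μH[(n:ℝ)] ∂μH[(n:ℝ)]
  set Y := ∫⁻ x in F, ENNReal.ofReal (H x ^ (s * p / α) * u x ^ p) ∂μH[(n:ℝ)]
  have hC : ENNReal.ofReal (2 * 2 ^ p) * X + 2 * Y
      ≤ ENNReal.ofReal (4 * 2 ^ p) * (1 / 2 * X + Y) := by
    rw [mul_add, ← mul_assoc]
    refine add_le_add (le_of_eq ?_) ?_
    · congr 1
      rw [show (1 / 2 : ℝ≥0∞) = ENNReal.ofReal (1 / 2) by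
        rw [ENNReal.ofReal_div_of_pos two_pos]; simp, ← ENNReal.ofReal_mul (by positivity)]
      congr 1; ring
    · gcongr
      rw [show (2 : ℝ≥0∞) = ENNReal.ofReal 2 by simp]
      refine ENNReal.ofReal_le_ofReal ?_
      have : (1 : ℝ) ≤ 2 ^ p := Real.one_le_rpow (by norm_num) (by linarith)
      linarith
  have hfinal : ENNReal.ofReal (c₀ * ∑' i, T i) ≤ ENNReal.ofReal (4 * 2 ^ p) * (1 / 2 * X + Y) := by
    rw [← tsum_mul_left, ENNReal.ofReal_tsum_of_nonneg (fun i => mul_nonneg hc₀.le (hT0 i))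
      (hsum.mul_left c₀), ENNReal.tsum_eq_iSup_sum]
    refine iSup_le fun t => (Finset.sum_le_sum fun i _ => hterm i).trans ?_
    rw [Finset.sum_add_distrib]
    exact (add_le_add (hGag t) (hCurv t)).trans hC
  have hpos : ENNReal.ofReal (4 * 2 ^ p) ≠ 0 := by simpa using by positivity
  refine (ENNReal.mul_le_mul_iff_right hpos ENNReal.ofReal_ne_top).1 (le_trans (le_of_eq ?_) hfinal)
  rw [← ENNReal.ofReal_mul (by positivity)]
  congr 1
  field_simp
end
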